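/- Assume Hypothesis (A) holds and let (Y^0, μ^0) ∈ χ be given, with μ^0 supported in B(0,R). Let (μ^0_N)_{N∈ℕ} be a sequence of atomic probability measures μ^0_N = (1/N)Σ_{i=1}^N δ_{X^0_i}, all supported in B(0,R), with lim_{N→∞} W₁(μ^0_N, μ^0) = 0. Let (u_N)_{N∈ℕ} ⊂ L^∞([0,T], 𝒰) be a sequence of controls converging to u* in L^∞([0,T], 𝒰), with 𝒰 a nonempty compact subset of ℝ^{md}. For each N, let ζ_N(t) = (Y_N(t), μ_N(t)) (where μ_N(t) = (1/N)Σ_i δ_{X_{i,N}(t)}) be the unique solution of the finite-dimensional system Ẏ_k = u_{k,N}, Ẋ_i = (H*μ_N)(X_i) + Σ_{ℓ=1}^d (G^ℓ*μ_{mℓ,N})(X_i) with initial datum (Y^0, X^0_N) and control u_N. Then the sequence (Y_N, μ_N) converges in C^0([0,T], χ) to some (Y*, μ*) which is a solution, in the sense of the Definition of solution, of the coupled system Ẏ_k = u*_k, ∂_t μ + ∇·[(H*μ + Σ_ℓ G^ℓ*μ_{mℓ})μ] = 0 with initial datum (Y^0, μ^0) and control u*. -/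

import Mathlib

open MeasureTheory Set Metric
open scoped BigOperators ENNReal NNReal RealInnerProductSpace

noncomputable section

/-- The set of couplings of two measures: probability measures on the product with the
prescribed marginals. -/
def couplings {E : Type*} [MeasurableSpace E]
    (μ ν : Measure E) : Set (Measure (E × E)) :=
  {π | IsProbabilityMeasure π ∧ π.map Prod.fst = μ ∧ π.map Prod.snd = ν}

/-- The 1-Wasserstein distance `W₁(μ,ν) = inf_{π ∈ Π(μ,ν)} ∫ |x−y| dπ(x,y)`. -/
def W1 {E : Type*} [MeasurableSpace E] [PseudoMetricSpace E]
    (μ ν : Measure E) : ℝ :=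
  sInf ((fun π : Measure (E × E) => ∫ p, dist p.1 p.2 ∂π) '' couplings μ ν)

/-- The topological support of a measure. -/
def msupport {E : Type*} [MeasurableSpace E] [TopologicalSpace E]
    (μ : Measure E) : Set E :=
  {x | ∀ U ∈ nhds x, μ U ≠ 0}

/-- The distance on `χ = ℝ^{dm} × 𝒫₁(ℝ^d)`:
`‖(Y,μ) − (Y',μ')‖_χ = (1/m) ∑_k |Y_k − Y'_k| + W₁(μ,μ')`. -/
def chiDist {d m : ℕ}
    (Y Y' : Fin m → EuclideanSpace ℝ (Fin d))
    (μ μ' : Measure (EuclideanSpace ℝ (Fin d))) : ℝ :=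
  (m : ℝ)⁻¹ * ∑ k : Fin m, ‖Y k - Y' k‖ + W1 μ μ'

/-- The empirical measure `(1/N) ∑_i δ_{X_i}`. -/
def empMeas {d N : ℕ} (X : Fin N → EuclideanSpace ℝ (Fin d)) :
    Measure (EuclideanSpace ℝ (Fin d)) :=
  (N : ℝ≥0∞)⁻¹ • ∑ i : Fin N, Measure.dirac (X i)

/-- The mean-field vector field `x ↦ (H*μ)(x) + ∑_ℓ (G^ℓ*μ_{mℓ})(x)`,
where `μ_{mℓ} = (1/m) ∑_k u_{kℓ} δ_{Y_k}`. -/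
def mfField {d m : ℕ}
    (H : EuclideanSpace ℝ (Fin d) → EuclideanSpace ℝ (Fin d))
    (G : Fin d → EuclideanSpace ℝ (Fin d) → EuclideanSpace ℝ (Fin d))
    (μ : Measure (EuclideanSpace ℝ (Fin d)))
    (u Y : Fin m → EuclideanSpace ℝ (Fin d))
    (x : EuclideanSpace ℝ (Fin d)) : EuclideanSpace ℝ (Fin d) :=
  (∫ ξ, H (x - ξ) ∂μ) + ∑ ℓ : Fin d, (m : ℝ)⁻¹ • ∑ k : Fin m, (u k ℓ) • G ℓ (x - Y k)

/-- Solution of the coupled leader/mean-field system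
`Ẏ_k = u_k`, `∂_t μ + ∇·[(H*μ + ∑_ℓ G^ℓ*μ_{mℓ}) μ] = 0` on `[0,T]`, in the sense of the
Definition of solution: `μ(t)` are probability measures, equi-compactly supported;
`(Y,μ)` is continuous w.r.t. the `χ`-metric; `Y` is a Carathéodory solution of
`Ẏ_k = u_k`; and the continuity equation holds in weak form against `C_c^∞` test
functions. -/
def IsMFSol {d m : ℕ} (T : ℝ)
    (H : EuclideanSpace ℝ (Fin d) → EuclideanSpace ℝ (Fin d))
    (G : Fin d → EuclideanSpace ℝ (Fin d) → EuclideanSpace ℝ (Fin d))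
    (u : ℝ → Fin m → EuclideanSpace ℝ (Fin d))
    (Y : ℝ → Fin m → EuclideanSpace ℝ (Fin d))
    (μ : ℝ → Measure (EuclideanSpace ℝ (Fin d))) : Prop :=
  (∀ t ∈ Icc (0:ℝ) T, IsProbabilityMeasure (μ t)) ∧
  (∃ R > 0, ∀ t ∈ Icc (0:ℝ) T,
      msupport (μ t) ⊆ closedBall (0 : EuclideanSpace ℝ (Fin d)) R) ∧
  (∀ t ∈ Icc (0:ℝ) T, ∀ ε > 0, ∃ δ > 0, ∀ s ∈ Icc (0:ℝ) T,
      |s - t| < δ → chiDist (Y s) (Y t) (μ s) (μ t) < ε) ∧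
  (∀ k, ∀ t ∈ Icc (0:ℝ) T, Y t k = Y 0 k + ∫ s in (0:ℝ)..t, u s k) ∧
  (∀ φ : EuclideanSpace ℝ (Fin d) → ℝ, ContDiff ℝ (⊤ : ℕ∞) φ → HasCompactSupport φ →
      ∀ t ∈ Icc (0:ℝ) T,
        ∫ x, φ x ∂(μ t) = (∫ x, φ x ∂(μ 0)) +
          ∫ s in (0:ℝ)..t,
            ∫ x, ⟪gradient φ x, mfField H G (μ s) (u s) (Y s) x⟫ ∂(μ s))

/-- Hypothesis (A): `H` and the `G^ℓ` are locally Lipschitz with sub-linear growth, the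
convolution with `H` is Lipschitz in the measure argument w.r.t. `W₁` (uniformly on balls,
for compactly supported probability measures), and the convolution with `G^ℓ` against
weighted empirical measures with common weights bounded by `M` is Lipschitz in the atoms. -/
def HypA {d : ℕ} (m : ℕ)
    (H : EuclideanSpace ℝ (Fin d) → EuclideanSpace ℝ (Fin d))
    (G : Fin d → EuclideanSpace ℝ (Fin d) → EuclideanSpace ℝ (Fin d)) : Prop :=
  LocallyLipschitz H ∧ (∀ ℓ, LocallyLipschitz (G ℓ)) ∧
  (∃ C ≥ 0, (∀ x, ‖H x‖ ≤ C * (1 + ‖x‖)) ∧ ∀ ℓ x, ‖G ℓ x‖ ≤ C * (1 + ‖x‖)) ∧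
  (∀ ρ > 0, ∀ R > 0, ∃ L ≥ 0,
    ∀ μ ν : Measure (EuclideanSpace ℝ (Fin d)),
      IsProbabilityMeasure μ → IsProbabilityMeasure ν →
      msupport μ ⊆ closedBall (0 : EuclideanSpace ℝ (Fin d)) R →
      msupport ν ⊆ closedBall (0 : EuclideanSpace ℝ (Fin d)) R →
      ∀ y ∈ closedBall (0 : EuclideanSpace ℝ (Fin d)) ρ,
        ‖(∫ ξ, H (y - ξ) ∂μ) - ∫ ξ, H (y - ξ) ∂ν‖ ≤ L * W1 μ ν) ∧
  (∀ ρ > 0, ∀ M ≥ 0, ∃ L ≥ 0, ∀ ℓ : Fin d, ∀ w : Fin m → ℝ, (∀ k, |w k| ≤ M) →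
    ∀ Y Y' : Fin m → EuclideanSpace ℝ (Fin d),
      ∀ y ∈ closedBall (0 : EuclideanSpace ℝ (Fin d)) ρ,
        ‖(m : ℝ)⁻¹ • ∑ k : Fin m, w k • (G ℓ (y - Y k) - G ℓ (y - Y' k))‖
          ≤ L * ((m : ℝ)⁻¹ * ∑ k : Fin m, ‖Y k - Y' k‖))

/-- Right-hand side of the followers' equation in the `N`-agent system (written through
the empirical measures): `(H*μ_N)(X_i) + ∑_ℓ (G^ℓ*μ_{mℓ})(X_i)`. -/
def finRHS {d N m : ℕ}
    (H : EuclideanSpace ℝ (Fin d) → EuclideanSpace ℝ (Fin d))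
    (G : Fin d → EuclideanSpace ℝ (Fin d) → EuclideanSpace ℝ (Fin d))
    (u : Fin m → EuclideanSpace ℝ (Fin d))
    (Y : Fin m → EuclideanSpace ℝ (Fin d))
    (X : Fin N → EuclideanSpace ℝ (Fin d)) (i : Fin N) :
    EuclideanSpace ℝ (Fin d) :=
  (N : ℝ)⁻¹ • ∑ j : Fin N, H (X i - X j)
    + ∑ ℓ : Fin d, (m : ℝ)⁻¹ • ∑ k : Fin m, (u k ℓ) • G ℓ (X i - Y k)

/-!
Write the empirical measure of the followers as the law of a randomly chosen follower. Near-optimal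
couplings of the initial data with `μ⁰`, glued along their common marginal `μ⁰`, put all these
random followers on one probability space, where their initial positions converge in `L¹` to a
random point of law `μ⁰`. Since `W₁` of two laws is at most the `L¹` distance of the random
variables, the velocity field is Lipschitz in `L¹`, and Grönwall's inequality makes the random
trajectories uniformly Cauchy in `L¹`. The law of their limit is the mean-field curve. The empirical
measures satisfy the weak equation by the chain rule along trajectories, and it passes to the limit
because `W₁` controls integrals of functions that are Lipschitz on the common compact support.
-/

section Wasserstein

variable {E : Type*} [NormedAddCommGroup E] [MeasurableSpace E] {μ ν : Measure E} {r : ℝ}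

/-- Probability measures concentrated on the closed ball of radius `r` about the origin. The
condition is stated almost everywhere, which is how it is checked for laws of random variables. -/
structure IsProbOnBall (r : ℝ) (μ : Measure E) : Prop where
  isProbabilityMeasure : IsProbabilityMeasure μ
  ae_norm_le : ∀ᵐ x ∂μ, ‖x‖ ≤ r

theorem IsProbOnBall.nonneg (hμ : IsProbOnBall r μ) : 0 ≤ r := by
  have := hμ.isProbabilityMeasure
  obtain ⟨x, hx⟩ := hμ.ae_norm_le.exists
  exact (norm_nonneg x).trans hx

theorem W1_nonneg (μ ν : Measure E) : 0 ≤ W1 μ ν :=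
  Real.sInf_nonneg (forall_mem_image.2 fun _ _ => integral_nonneg fun _ => dist_nonneg)

theorem exists_coupling_integral_lt (μ ν : Measure E) [IsProbabilityMeasure μ]
    [IsProbabilityMeasure ν] {ε : ℝ} (hε : 0 < ε) :
    ∃ π ∈ couplings μ ν, ∫ p, dist p.1 p.2 ∂π < W1 μ ν + ε := by
  have hne : (couplings μ ν).Nonempty := ⟨μ.prod ν, inferInstance, by simp, by simp⟩
  exact exists_mem_image.1 (Real.lt_sInf_add_pos (hne.image fun π => ∫ p, dist p.1 p.2 ∂π) hε)

theorem msupport_eq_support (μ : Measure E) : msupport μ = μ.support := by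
  ext x
  simp only [msupport, mem_ofPred_eq, Measure.mem_support_iff_forall, pos_iff_ne_zero]

theorem IsProbOnBall.mono {r' : ℝ} (hμ : IsProbOnBall r μ) (h : r ≤ r') : IsProbOnBall r' μ :=
  ⟨hμ.isProbabilityMeasure, hμ.ae_norm_le.mono fun _ hx => hx.trans h⟩

theorem isProbOnBall_map [OpensMeasurableSpace E] {Ω : Type*} [MeasurableSpace Ω] {P : Measure Ω}
    [IsProbabilityMeasure P] {f : Ω → E} (hf : AEMeasurable f P) (hfr : ∀ᵐ ω ∂P, ‖f ω‖ ≤ r) :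
    IsProbOnBall r (P.map f) :=
  ⟨Measure.isProbabilityMeasure_map hf,
    (ae_map_iff hf (measurableSet_le (by fun_prop) (by fun_prop))).2 hfr⟩

variable [SecondCountableTopology E]

theorem isProbOnBall_iff :
    IsProbOnBall r μ ↔ IsProbabilityMeasure μ ∧ msupport μ ⊆ closedBall 0 r := by
  rw [msupport_eq_support]
  refine ⟨fun h => ⟨h.1, Measure.support_subset_of_isClosed isClosed_closedBall ?_⟩,
    fun h => ⟨h.1, ?_⟩⟩
  · filter_upwards [h.2] with x hx using mem_closedBall_zero_iff.2 hx
  · filter_upwards [Measure.support_mem_ae (μ := μ)] with x hx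
    exact mem_closedBall_zero_iff.1 (h.2 hx)

variable [BorelSpace E]

theorem W1_map_le {Ω : Type*} [MeasurableSpace Ω] {P : Measure Ω} [IsProbabilityMeasure P]
    {f g : Ω → E} (hf : AEMeasurable f P) (hg : AEMeasurable g P) :
    W1 (P.map f) (P.map g) ≤ ∫ ω, dist (f ω) (g ω) ∂P := by
  have hfg : AEMeasurable (fun ω => (f ω, g ω)) P := hf.prodMk hg
  refine csInf_le ⟨0, forall_mem_image.2 fun _ _ => integral_nonneg fun _ => dist_nonneg⟩
    ⟨P.map fun ω => (f ω, g ω), ⟨Measure.isProbabilityMeasure_map hfg, ?_, ?_⟩, ?_⟩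
  · rw [AEMeasurable.map_map_of_aemeasurable measurable_fst.aemeasurable hfg]; rfl
  · rw [AEMeasurable.map_map_of_aemeasurable measurable_snd.aemeasurable hfg]; rfl
  · exact integral_map hfg (by fun_prop)

theorem W1_self (μ : Measure E) [IsProbabilityMeasure μ] : W1 μ μ = 0 :=
  le_antisymm (by simpa using W1_map_le (P := μ) aemeasurable_id aemeasurable_id) (W1_nonneg μ μ)

theorem W1_map_L1_le {Ω : Type*} [MeasurableSpace Ω] {P : Measure Ω} [IsProbabilityMeasure P]
    (f g : Ω →₁[P] E) : W1 (P.map f) (P.map g) ≤ dist f g :=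
  (W1_map_le (Lp.aestronglyMeasurable f).aemeasurable
    (Lp.aestronglyMeasurable g).aemeasurable).trans_eq (L1.dist_eq_integral_dist f g).symm

theorem IsProbOnBall.integrable_of_lipschitzOnWith {F : Type*} [NormedAddCommGroup F]
    {f : E → F} {K : ℝ≥0} (hμ : IsProbOnBall r μ) (hf : LipschitzOnWith K f (closedBall 0 r)) :
    Integrable f μ := by
  have := hμ.isProbabilityMeasure
  have hball : ∀ᵐ x ∂μ, x ∈ closedBall (0 : E) r := by simpa using hμ.ae_norm_le
  refine .of_bound ?_ (‖f 0‖ + K * r) ?_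
  · rw [← Measure.restrict_eq_self_of_ae_mem hball]
    exact hf.continuousOn.aestronglyMeasurable isClosed_closedBall.measurableSet
  · filter_upwards [hball] with x hx
    calc ‖f x‖ ≤ ‖f 0‖ + ‖f x - f 0‖ := norm_le_insert' _ _
      _ ≤ ‖f 0‖ + K * ‖x - 0‖ := by
          gcongr; exact hf.norm_sub_le hx (mem_closedBall_self hμ.nonneg)
      _ ≤ ‖f 0‖ + K * r := by gcongr; simpa using hx

theorem norm_integral_fst_sub_integral_snd_le {F : Type*} [NormedAddCommGroup F]
    [NormedSpace ℝ F] {f : E → F} {K : ℝ≥0} {π : Measure (E × E)}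
    (hfst : IsProbOnBall r (π.map Prod.fst)) (hsnd : IsProbOnBall r (π.map Prod.snd))
    (hf : LipschitzOnWith K f (closedBall 0 r)) :
    ‖∫ x, f x ∂(π.map Prod.fst) - ∫ x, f x ∂(π.map Prod.snd)‖ ≤ K * ∫ p, dist p.1 p.2 ∂π := by
  have hf₁ := hfst.integrable_of_lipschitzOnWith hf
  have hf₂ := hsnd.integrable_of_lipschitzOnWith hf
  have hid₁ := hfst.integrable_of_lipschitzOnWith (LipschitzWith.id.lipschitzOnWith)
  have hid₂ := hsnd.integrable_of_lipschitzOnWith (LipschitzWith.id.lipschitzOnWith)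
  have hdist : Integrable (fun p : E × E => dist p.1 p.2) π := by
    simpa [dist_eq_norm] using
      ((hid₁.comp_measurable measurable_fst).sub (hid₂.comp_measurable measurable_snd)).norm
  rw [integral_map measurable_fst.aemeasurable hf₁.1,
    integral_map measurable_snd.aemeasurable hf₂.1, ← integral_sub
      (show Integrable (fun p => f p.1) π from hf₁.comp_measurable measurable_fst)
      (show Integrable (fun p => f p.2) π from hf₂.comp_measurable measurable_snd),
    ← integral_const_mul]
  refine norm_integral_le_of_norm_le (hdist.const_mul _) ?_
  filter_upwards [ae_of_ae_map measurable_fst.aemeasurable hfst.ae_norm_le,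
    ae_of_ae_map measurable_snd.aemeasurable hsnd.ae_norm_le] with p hp₁ hp₂
  rw [← dist_eq_norm]
  exact hf.dist_le_mul _ (mem_closedBall_zero_iff.2 hp₁) _ (mem_closedBall_zero_iff.2 hp₂)

theorem norm_integral_sub_integral_le_W1 {F : Type*} [NormedAddCommGroup F] [NormedSpace ℝ F]
    {f : E → F} {K : ℝ≥0} (hμ : IsProbOnBall r μ) (hν : IsProbOnBall r ν)
    (hf : LipschitzOnWith K f (closedBall 0 r)) :
    ‖∫ x, f x ∂μ - ∫ x, f x ∂ν‖ ≤ K * W1 μ ν := by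
  have := hμ.isProbabilityMeasure
  have := hν.isProbabilityMeasure
  have hcoupling : ∀ ε > 0, ‖∫ x, f x ∂μ - ∫ x, f x ∂ν‖ ≤ K * (W1 μ ν + ε) := fun ε hε => by
    obtain ⟨π, ⟨-, rfl, rfl⟩, hlt⟩ := exists_coupling_integral_lt μ ν hε
    exact (norm_integral_fst_sub_integral_snd_le hμ hν hf).trans (by gcongr)
  have hlim : Filter.Tendsto (fun ε => K * (W1 μ ν + ε)) (nhdsWithin 0 (Ioi 0))
      (nhds (K * (W1 μ ν + 0))) :=
    ((by fun_prop : Continuous fun ε => K * (W1 μ ν + ε)).tendsto 0).mono_left nhdsWithin_le_nhds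
  rw [add_zero] at hlim
  exact ge_of_tendsto hlim (Filter.eventually_of_mem self_mem_nhdsWithin hcoupling)

theorem tendsto_integral_of_tendstoUniformlyOn_of_W1 {F : Type*} [NormedAddCommGroup F]
    [NormedSpace ℝ F] {μ' : ℕ → Measure E} {f : E → F} {f' : ℕ → E → F} {K : ℝ≥0}
    (hμ' : ∀ n, IsProbOnBall r (μ' n)) (hμ : IsProbOnBall r μ)
    (hW : Filter.Tendsto (fun n => W1 (μ' n) μ) Filter.atTop (nhds 0))
    (hf' : ∀ n, Integrable (f' n) (μ' n)) (hf : LipschitzOnWith K f (closedBall 0 r))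
    (hff' : TendstoUniformlyOn f' f Filter.atTop (closedBall 0 r)) :
    Filter.Tendsto (fun n => ∫ x, f' n x ∂(μ' n)) Filter.atTop (nhds (∫ x, f x ∂μ)) := by
  have hsub : Filter.Tendsto (fun n => ∫ x, f' n x ∂(μ' n) - ∫ x, f x ∂(μ' n))
      Filter.atTop (nhds 0) := by
    rw [Metric.tendsto_atTop]
    intro ε hε
    obtain ⟨n₀, hn₀⟩ := Filter.eventually_atTop.1
      (Metric.tendstoUniformlyOn_iff.1 hff' (ε / 2) (half_pos hε))
    refine ⟨n₀, fun n hn => ?_⟩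
    have := (hμ' n).isProbabilityMeasure
    rw [← integral_sub (hf' n) ((hμ' n).integrable_of_lipschitzOnWith hf), dist_zero_right]
    refine (norm_integral_le_of_norm_le_const (C := ε / 2) ?_).trans_lt ?_
    · filter_upwards [(hμ' n).ae_norm_le] with x hx
      rw [norm_sub_rev, ← dist_eq_norm]
      exact (hn₀ n hn x (mem_closedBall_zero_iff.2 hx)).le
    · simpa using half_lt_self hε
  have hW' : Filter.Tendsto (fun n => ∫ x, f x ∂(μ' n)) Filter.atTop (nhds (∫ x, f x ∂μ)) :=
    tendsto_iff_norm_sub_tendsto_zero.2 <| squeeze_zero (fun _ => norm_nonneg _)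
      (fun n => norm_integral_sub_integral_le_W1 (hμ' n) hμ hf)
      (by simpa using hW.const_mul (K : ℝ))
  simpa using hsub.add hW'

end Wasserstein

section RandomIndex

theorem exists_measurable_map_prodMk_eq {α γ : Type*} [MeasurableSpace α] [MeasurableSpace γ]
    [StandardBorelSpace γ] [Nonempty γ] (ρ : Measure (α × γ)) [IsProbabilityMeasure ρ] :
    ∃ g : α × unitInterval → γ, Measurable g ∧
      ((ρ.map Prod.fst).prod volume).map (fun ω => (ω.1, g ω)) = ρ := by
  obtain ⟨f, hf, hfρ⟩ := ρ.condKernel.exists_measurable_map_eq_unitInterval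
  refine ⟨Function.uncurry f, hf, Measure.ext_of_lintegral _ fun h hh => ?_⟩
  have : IsProbabilityMeasure (ρ.map Prod.fst) :=
    Measure.isProbabilityMeasure_map measurable_fst.aemeasurable
  have hm : Measurable fun ω : α × unitInterval => (ω.1, Function.uncurry f ω) := by fun_prop
  rw [lintegral_map hh hm, lintegral_prod (fun ω => h (ω.1, Function.uncurry f ω))
    (hh.comp hm).aemeasurable]
  conv_rhs => rw [← ρ.disintegrate ρ.condKernel, Measure.lintegral_compProd hh, Measure.fst]
  refine lintegral_congr fun a => ?_
  rw [← hfρ a, lintegral_map (by fun_prop) hf.of_uncurry_left]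
  rfl

theorem exists_measurable_map_eq_integral_dist_lt {E : Type*} [NormedAddCommGroup E]
    [CompleteSpace E] [SecondCountableTopology E] [MeasurableSpace E] [BorelSpace E]
    (μ ν : Measure E) [IsProbabilityMeasure μ] [IsProbabilityMeasure ν] {ε : ℝ} (hε : 0 < ε) :
    ∃ g : E × unitInterval → E, Measurable g ∧ (μ.prod volume).map g = ν ∧
      ∫ ω, dist (g ω) ω.1 ∂(μ.prod volume) < W1 ν μ + ε := by
  obtain ⟨π, ⟨hπ, hfst, hsnd⟩, hlt⟩ := exists_coupling_integral_lt ν μ hε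
  have : IsProbabilityMeasure (π.map Prod.swap) :=
    Measure.isProbabilityMeasure_map measurable_swap.aemeasurable
  obtain ⟨g, hg, hgπ⟩ := exists_measurable_map_prodMk_eq (π.map Prod.swap)
  rw [Measure.map_map measurable_fst measurable_swap,
    show Prod.fst ∘ Prod.swap = @Prod.snd E E from rfl, hsnd] at hgπ
  have hm : Measurable fun ω : E × unitInterval => (ω.1, g ω) := by fun_prop
  refine ⟨g, hg, ?_, ?_⟩
  · rw [← hfst, show @Prod.fst E E = Prod.snd ∘ Prod.swap from rfl,
      ← Measure.map_map measurable_snd measurable_swap, ← hgπ, Measure.map_map measurable_snd hm]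
    rfl
  · calc ∫ ω, dist (g ω) ω.1 ∂(μ.prod volume)
        = ∫ p, dist p.2 p.1 ∂(π.map Prod.swap) := by
          rw [← hgπ, integral_map hm.aemeasurable (by fun_prop)]
      _ = ∫ p, dist p.1 p.2 ∂π := integral_map measurable_swap.aemeasurable (by fun_prop)
      _ < W1 ν μ + ε := hlt

theorem exists_measurable_lift_of_map_eq {Ω ι E : Type*} [MeasurableSpace Ω] [MeasurableSpace ι]
    [StandardBorelSpace ι] [Nonempty ι] [MeasurableSpace E] [MeasurableEq E]
    {P : Measure Ω} {υ : Measure ι} [IsProbabilityMeasure P] [IsProbabilityMeasure υ] {Z : Ω → E}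
    {X : ι → E} (hZ : Measurable Z) (hX : Measurable X) (h : P.map Z = υ.map X) :
    ∃ ξ : Ω × unitInterval → ι, Measurable ξ ∧ (P.prod volume).map ξ = υ ∧
      ∀ᵐ ω ∂(P.prod volume), X (ξ ω) = Z ω.1 := by
  have hgraph : Measurable fun i => (X i, i) := hX.prodMk measurable_id
  have : IsProbabilityMeasure (υ.map fun i => (X i, i)) :=
    Measure.isProbabilityMeasure_map hgraph.aemeasurable
  obtain ⟨g, hg, hgυ⟩ := exists_measurable_map_prodMk_eq (υ.map fun i => (X i, i))
  have hZ' : Measurable fun ω : Ω × unitInterval => (Z ω.1, ω.2) := by fun_prop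
  have hξ : Measurable fun ω : Ω × unitInterval => (Z ω.1, g (Z ω.1, ω.2)) := by fun_prop
  have hlaw : (P.prod volume).map (fun ω => (Z ω.1, g (Z ω.1, ω.2))) =
      υ.map fun i => (X i, i) := by
    rw [← hgυ, Measure.map_map measurable_fst hgraph, Function.comp_def, ← h]
    conv_rhs => rw [← Measure.map_id (μ := (volume : Measure unitInterval)),
      Measure.map_prod_map _ _ hZ measurable_id, Measure.map_map (by fun_prop) (by fun_prop)]
    rfl
  refine ⟨fun ω => g (Z ω.1, ω.2), hg.comp hZ', ?_, ?_⟩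
  · have := congrArg (Measure.map Prod.snd) hlaw
    rwa [Measure.map_map measurable_snd hξ, Measure.map_map measurable_snd hgraph,
      show Prod.snd ∘ (fun i => (X i, i)) = id from rfl, Measure.map_id] at this
  · have hae : ∀ᵐ p ∂(υ.map fun i => (X i, i)), X p.2 = p.1 :=
      (ae_map_iff hgraph.aemeasurable
        (measurableSet_eq_fun (hX.comp measurable_snd) measurable_fst)).2 (ae_of_all _ fun _ => rfl)
    rw [← hlaw] at hae
    exact ae_of_ae_map hξ.aemeasurable hae

theorem exists_random_index {ι E : Type*} [MeasurableSpace ι] [StandardBorelSpace ι] [Nonempty ι]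
    [NormedAddCommGroup E] [CompleteSpace E] [SecondCountableTopology E] [MeasurableSpace E]
    [BorelSpace E] {υ : Measure ι} [IsProbabilityMeasure υ] {X : ι → E} (hX : Measurable X)
    (μ : Measure E) [IsProbabilityMeasure μ] {ε : ℝ} (hε : 0 < ε) :
    ∃ ξ : (E × unitInterval) × unitInterval → ι, Measurable ξ ∧
      ((μ.prod volume).prod volume).map ξ = υ ∧
      ∫ ω, dist (X (ξ ω)) ω.1.1 ∂((μ.prod volume).prod volume) < W1 (υ.map X) μ + ε := by
  have : IsProbabilityMeasure (υ.map X) := Measure.isProbabilityMeasure_map hX.aemeasurable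
  obtain ⟨g, hg, hgυ, hlt⟩ := exists_measurable_map_eq_integral_dist_lt μ (υ.map X) hε
  obtain ⟨ξ, hξ, hξυ, hXξ⟩ := exists_measurable_lift_of_map_eq hg hX hgυ
  refine ⟨ξ, hξ, hξυ, lt_of_eq_of_lt ?_ hlt⟩
  calc ∫ ω, dist (X (ξ ω)) ω.1.1 ∂((μ.prod volume).prod volume)
      = ∫ ω, dist (g ω.1) ω.1.1 ∂((μ.prod volume).prod volume) :=
        integral_congr_ae (hXξ.mono fun ω hω => by simp only [hω])
    _ = ∫ ω, dist (g ω) ω.1 ∂(μ.prod volume) := by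
        rw [integral_fun_fst fun ω => dist (g ω) ω.1]; simp

end RandomIndex

section EmpiricalMeasure

variable {d N : ℕ}

theorem empMeas_eq_map_uniformOn (X : Fin N → EuclideanSpace ℝ (Fin d)) :
    empMeas X = (ProbabilityTheory.uniformOn univ).map X := by
  have hX : Measurable X := measurable_of_finite X
  simp [empMeas, ProbabilityTheory.uniformOn, ProbabilityTheory.cond, Measure.count,
    Measure.map_finset_sum' hX.aemeasurable, Measure.map_dirac' hX]

theorem integral_empMeas {F : Type*} [NormedAddCommGroup F] [NormedSpace ℝ F]
    [CompleteSpace F] (X : Fin N → EuclideanSpace ℝ (Fin d)) (f : EuclideanSpace ℝ (Fin d) → F) :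
    ∫ x, f x ∂(empMeas X) = (N : ℝ)⁻¹ • ∑ i, f (X i) := by
  rw [empMeas, integral_smul_measure,
    integral_finsetSum_measure fun i _ => integrable_dirac enorm_lt_top]
  simp only [integral_dirac, ENNReal.toReal_inv, ENNReal.toReal_natCast]

theorem isProbOnBall_empMeas [NeZero N] {r : ℝ} {X : Fin N → EuclideanSpace ℝ (Fin d)}
    (hX : ∀ i, ‖X i‖ ≤ r) : IsProbOnBall r (empMeas X) := by
  rw [empMeas_eq_map_uniformOn]
  exact isProbOnBall_map (measurable_of_finite X).aemeasurable (ae_of_all _ hX)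

end EmpiricalMeasure

section Primitive

theorem intervalIntegrable_of_norm_le {V : Type*} [NormedAddCommGroup V]
    [SecondCountableTopology V] [MeasurableSpace V] [BorelSpace V] {f : ℝ → V} {a b C : ℝ}
    (hf : Measurable f) (hC : ∀ t, ‖f t‖ ≤ C) : IntervalIntegrable f volume a b :=
  intervalIntegrable_const.mono_fun' hf.aestronglyMeasurable (ae_of_all _ hC)

theorem tendstoUniformlyOn_pi_of_norm_sub_le {α ι F : Type*} [Finite ι] [SeminormedAddCommGroup F]
    {f' : ℕ → α → ι → F} {f : α → ι → F} {S : Set α}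
    (h : ∀ ε > 0, ∃ n₀, ∀ n ≥ n₀, ∀ t ∈ S, ∀ k, ‖f' n t k - f t k‖ ≤ ε) :
    TendstoUniformlyOn f' f Filter.atTop S := by
  cases nonempty_fintype ι
  refine Metric.tendstoUniformlyOn_iff.2 fun ε hε => ?_
  filter_upwards [Filter.eventually_atTop.2 (h _ (half_pos hε))] with n hn t ht
  rw [dist_comm, dist_eq_norm]
  exact ((pi_norm_le_iff_of_nonneg (half_pos hε).le).2 (hn t ht)).trans_lt (half_lt_self hε)

variable {V W : Type*} [NormedAddCommGroup V] [NormedSpace ℝ V] [NormedAddCommGroup W]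
  [NormedSpace ℝ W] {x y f g : ℝ → V} {a b : ℝ}

/-- `x` is a primitive of the integrable function `f` on `[a, b]`, i.e. an absolutely continuous
curve with `x' = f` almost everywhere. With `f t = F t (x t)` this says that `x` is a Carathéodory
solution of `x' = F t x`. -/
structure IsPrimitiveOn (x f : ℝ → V) (a b : ℝ) : Prop where
  intervalIntegrable : IntervalIntegrable f volume a b
  eq_add_integral : ∀ t ∈ Icc a b, x t = x a + ∫ s in a..t, f s

theorem le_mul_exp_of_le_add_integral {φ : ℝ → ℝ} {A K : ℝ} (hK : 0 ≤ K)
    (hφ : ContinuousOn φ (Icc a b)) (h : ∀ t ∈ Icc a b, φ t ≤ A + ∫ s in a..t, K * φ s) :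
    ∀ t ∈ Icc a b, φ t ≤ A * Real.exp (K * (t - a)) := by
  intro t ht
  have hab : a ≤ b := ht.1.trans ht.2
  set ψ : ℝ → ℝ := IccExtend hab ((Icc a b).domRestrict φ) with hψ
  have hψc : Continuous ψ := (continuousOn_iff_continuous_domRestrict.1 hφ).Icc_extend'
  have hψφ : ∀ s ∈ Icc a b, ψ s = φ s := fun s hs => by
    rw [hψ, IccExtend_of_mem hab _ hs, domRestrict_apply]
  set I : ℝ → ℝ := fun s => A + ∫ r in a..s, K * ψ r with hI
  have hI' : ∀ s, HasDerivAt I (K * ψ s) s := fun s =>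
    ((hψc.const_mul K).integral_hasStrictDerivAt a s).hasDerivAt.const_add A
  have hφI : ∀ s ∈ Icc a b, φ s ≤ I s := fun s hs => by
    refine (h s hs).trans_eq (congrArg (A + ·) (intervalIntegral.integral_congr fun r hr => ?_))
    rw [uIcc_of_le hs.1] at hr
    simp only [hψφ r ⟨hr.1, hr.2.trans hs.2⟩]
  have hgronwall : I t ≤ gronwallBound A K 0 (t - a) :=
    le_gronwallBound_of_liminf_deriv_right_le (f' := fun s => K * ψ s)
      (fun s _ => (hI' s).continuousAt.continuousWithinAt)
      (fun s _ r hr => (hI' s).hasDerivWithinAt.liminf_right_slope_le hr)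
      (by simp [hI])
      (fun s hs => by
        rw [hψφ s (Ico_subset_Icc_self hs), add_zero]
        exact mul_le_mul_of_nonneg_left (hφI s (Ico_subset_Icc_self hs)) hK) t ht
  rw [gronwallBound_ε0] at hgronwall
  exact (hφI t ht).trans hgronwall

namespace IsPrimitiveOn

theorem of_eq_add_integral (hab : a ≤ b) (hf : IntervalIntegrable f volume a b) {x₀ : V}
    (h : ∀ t ∈ Icc a b, x t = x₀ + ∫ s in a..t, f s) : IsPrimitiveOn x f a b := by
  have ha : x a = x₀ := by simpa using h a (left_mem_Icc.2 hab)
  exact ⟨hf, ha ▸ h⟩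

theorem continuousOn (hx : IsPrimitiveOn x f a b) : ContinuousOn x (Icc a b) := by
  rcases le_or_gt a b with hab | hab
  · have := intervalIntegral.continuousOn_primitive_interval' hx.intervalIntegrable left_mem_uIcc
    rw [uIcc_of_le hab] at this
    exact (continuousOn_const.add this).congr hx.eq_add_integral
  · rw [Icc_eq_empty hab.not_ge]
    exact continuousOn_empty x

theorem intervalIntegrable_left (hx : IsPrimitiveOn x f a b) {t : ℝ} (ht : t ∈ Icc a b) :
    IntervalIntegrable f volume a t :=
  hx.intervalIntegrable.mono_set
    (uIcc_subset_uIcc_left (Icc_subset_uIcc ht))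

theorem sub (hx : IsPrimitiveOn x f a b) (hy : IsPrimitiveOn y g a b) :
    IsPrimitiveOn (fun t => x t - y t) (fun t => f t - g t) a b := by
  refine ⟨hx.intervalIntegrable.sub hy.intervalIntegrable, fun t ht => ?_⟩
  rw [hx.eq_add_integral t ht, hy.eq_add_integral t ht, intervalIntegral.integral_sub
    (hx.intervalIntegrable_left ht) (hy.intervalIntegrable_left ht)]
  abel

theorem clm_comp [CompleteSpace V] [CompleteSpace W] (hx : IsPrimitiveOn x f a b) (L : V →L[ℝ] W) :
    IsPrimitiveOn (fun t => L (x t)) (fun t => L (f t)) a b := by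
  refine ⟨⟨L.integrable_comp hx.intervalIntegrable.1, L.integrable_comp hx.intervalIntegrable.2⟩,
    fun t ht => ?_⟩
  rw [hx.eq_add_integral t ht, map_add,
    L.intervalIntegral_comp_comm (hx.intervalIntegrable_left ht)]

theorem of_forall_apply {ι : Type*} [Fintype ι] [CompleteSpace V] {x f : ℝ → ι → V}
    (h : ∀ i, IsPrimitiveOn (fun t => x t i) (fun t => f t i) a b) : IsPrimitiveOn x f a b := by
  refine ⟨⟨.of_eval fun i => (h i).intervalIntegrable.1,
    .of_eval fun i => (h i).intervalIntegrable.2⟩, fun t ht => funext fun i => ?_⟩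
  rw [(h i).eq_add_integral t ht, Pi.add_apply, intervalIntegral.integral_of_le ht.1,
    intervalIntegral.integral_of_le ht.1,
    eval_integral fun j => ((h j).intervalIntegrable_left ht).1]

theorem norm_le (hx : IsPrimitiveOn x f a b) {K c : ℝ} (hK : 0 ≤ K) (hc : 0 ≤ c)
    (hf : ∀ s ∈ Icc a b, ‖f s‖ ≤ K * ‖x s‖ + c) {t : ℝ} (ht : t ∈ Icc a b) :
    ‖x t‖ ≤ (‖x a‖ + c * (b - a)) * Real.exp (K * (b - a)) := by
  have hxK : ContinuousOn (fun s => K * ‖x s‖) (Icc a b) :=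
    continuousOn_const.mul hx.continuousOn.norm
  have hint : ∀ t ∈ Icc a b, ‖x t‖ ≤ (‖x a‖ + c * (b - a)) + ∫ s in a..t, K * ‖x s‖ := by
    intro t ht
    have hsub : Icc a t ⊆ Icc a b := Icc_subset_Icc_right ht.2
    have hi : IntervalIntegrable (fun s => K * ‖x s‖) volume a t :=
      (hxK.mono hsub).intervalIntegrable_of_Icc ht.1
    calc ‖x t‖ ≤ ‖x a‖ + ‖∫ s in a..t, f s‖ := hx.eq_add_integral t ht ▸ norm_add_le _ _
      _ ≤ ‖x a‖ + ∫ s in a..t, (K * ‖x s‖ + c) := by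
          gcongr
          exact intervalIntegral.norm_integral_le_of_norm_le ht.1
            (ae_of_all _ fun s hs => hf s (hsub (Ioc_subset_Icc_self hs)))
            (hi.add intervalIntegrable_const)
      _ = (‖x a‖ + c * (t - a)) + ∫ s in a..t, K * ‖x s‖ := by
          rw [intervalIntegral.integral_add hi intervalIntegrable_const,
            intervalIntegral.integral_const, smul_eq_mul]
          ring
      _ ≤ (‖x a‖ + c * (b - a)) + ∫ s in a..t, K * ‖x s‖ := by gcongr; exact ht.2
  have hab : a ≤ b := ht.1.trans ht.2
  refine (le_mul_exp_of_le_add_integral hK hx.continuousOn.norm hint t ht).trans ?_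
  gcongr
  exact ht.2

theorem of_tendsto {x' f' : ℕ → ℝ → V} {C : ℝ} (hab : a ≤ b)
    (h : ∀ n, IsPrimitiveOn (x' n) (f' n) a b)
    (hx : ∀ t ∈ Icc a b, Filter.Tendsto (fun n => x' n t) Filter.atTop (nhds (x t)))
    (hf : ∀ t ∈ Icc a b, Filter.Tendsto (fun n => f' n t) Filter.atTop (nhds (f t)))
    (hC : ∀ᶠ n in Filter.atTop, ∀ t ∈ Icc a b, ‖f' n t‖ ≤ C) : IsPrimitiveOn x f a b := by
  have hmeas : ∀ t ∈ Icc a b, ∀ n, AEStronglyMeasurable (f' n) (volume.restrict (uIoc a t)) :=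
    fun t ht n => (intervalIntegrable_iff.1 ((h n).intervalIntegrable_left ht)).1
  have hsub : ∀ t ∈ Icc a b, uIoc a t ⊆ Icc a b := fun t ht =>
    uIoc_of_le ht.1 ▸ Ioc_subset_Icc_self.trans (Icc_subset_Icc_right ht.2)
  refine ⟨?_, fun t ht => ?_⟩
  · have hbm := right_mem_Icc.2 hab
    refine (intervalIntegrable_const (c := C)).mono_fun' (aestronglyMeasurable_of_tendsto_ae
      Filter.atTop (hmeas b hbm) ?_) ?_ <;>
    filter_upwards [ae_restrict_mem measurableSet_uIoc] with t ht
    · exact hf t (hsub b hbm ht)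
    · exact le_of_tendsto (hf t (hsub b hbm ht)).norm (hC.mono fun n hn => hn t (hsub b hbm ht))
  · have hint := intervalIntegral.tendsto_integral_filter_of_dominated_convergence
      (μ := volume) (a := a) (b := t) (fun _ => C) (.of_forall (hmeas t ht))
      (hC.mono fun n hn => ae_of_all _ fun s hs => hn s (hsub t ht hs))
      intervalIntegrable_const (ae_of_all _ fun s hs => hf s (hsub t ht hs))
    refine tendsto_nhds_unique (hx t ht) ?_
    exact ((hx a (left_mem_Icc.2 hab)).add hint).congr fun n => ((h n).eq_add_integral t ht).symm

theorem norm_sub_le (hx : IsPrimitiveOn x f a b) {C : ℝ} (hC : ∀ s ∈ Icc a b, ‖f s‖ ≤ C) {s t : ℝ}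
    (hs : s ∈ Icc a b) (ht : t ∈ Icc a b) : ‖x t - x s‖ ≤ C * |t - s| := by
  rw [hx.eq_add_integral t ht, hx.eq_add_integral s hs, add_sub_add_left_eq_sub,
    intervalIntegral.integral_interval_sub_left (hx.intervalIntegrable_left ht)
      (hx.intervalIntegrable_left hs)]
  exact intervalIntegral.norm_integral_le_of_norm_le_const fun r hr =>
    hC r (uIoc_subset_uIcc.trans (ordConnected_Icc.uIcc_subset hs ht) hr)

theorem tendstoUniformlyOn {ι : Type*} {l : Filter ι} {x' f' : ι → ℝ → V}
    (h : ∀ n, IsPrimitiveOn (x' n) (f' n) a b) (hx : IsPrimitiveOn x f a b)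
    (ha : Filter.Tendsto (fun n => x' n a) l (nhds (x a)))
    (hf : TendstoUniformlyOn f' f l (Icc a b)) : TendstoUniformlyOn x' x l (Icc a b) := by
  refine Metric.tendstoUniformlyOn_iff.2 fun ε hε => ?_
  have hδ : 0 < ε / (1 + |b - a|) := by positivity
  filter_upwards [Metric.tendsto_nhds.1 ha _ hδ, Metric.tendstoUniformlyOn_iff.1 hf _ hδ]
    with n hna hnf t ht
  have ha' := left_mem_Icc.2 (ht.1.trans ht.2)
  have hincrement := (hx.sub (h n)).norm_sub_le (fun s hs => dist_eq_norm (f s) _ ▸ (hnf s hs).le)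
    ha' ht
  calc dist (x t) (x' n t) ≤ ‖x a - x' n a‖ + ‖x t - x' n t - (x a - x' n a)‖ := by
        rw [dist_eq_norm]
        exact norm_le_insert' _ _
    _ < ε / (1 + |b - a|) + ε / (1 + |b - a|) * |b - a| := by
        refine add_lt_add_of_lt_of_le (by rwa [← dist_eq_norm, dist_comm]) (hincrement.trans ?_)
        gcongr 1
        exact abs_le_abs_of_nonneg (sub_nonneg.2 ht.1) (by gcongr; exact ht.2)
    _ = ε := by field_simp

theorem ae_hasDerivAt [CompleteSpace V] (hx : IsPrimitiveOn x f a b) :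
    ∀ᵐ t, t ∈ Ioo a b → HasDerivAt x (f t) t := by
  filter_upwards [hx.intervalIntegrable.ae_hasDerivAt_integral] with t hderiv ht
  refine ((hderiv (Icc_subset_uIcc (Ioo_subset_Icc_self ht)) a left_mem_uIcc).const_add
    (x a)).congr_of_eventuallyEq ?_
  filter_upwards [Icc_mem_nhds ht.1 ht.2] with s hs using hx.eq_add_integral s hs

theorem comp_gradient {F : Type*} [NormedAddCommGroup F] [InnerProductSpace ℝ F] [CompleteSpace F]
    {x f : ℝ → F} (hab : a ≤ b) (hx : IsPrimitiveOn x f a b) {C : ℝ}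
    (hC : ∀ t ∈ Icc a b, ‖f t‖ ≤ C) {φ : F → ℝ} {K : ℝ≥0} (hφ : Differentiable ℝ φ)
    (hφK : LipschitzWith K φ) :
    IsPrimitiveOn (fun t => φ (x t)) (fun t => ⟪gradient φ (x t), f t⟫) a b := by
  have hxC : LipschitzOnWith C.toNNReal x (uIcc a b) := by
    rw [uIcc_of_le hab]
    refine .of_dist_le_mul fun t ht s hs => ?_
    rw [dist_eq_norm, Real.dist_eq,
      Real.coe_toNNReal _ ((norm_nonneg _).trans (hC a (left_mem_Icc.2 hab)))]
    exact hx.norm_sub_le hC hs ht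
  have hac := (hφK.comp_lipschitzOnWith hxC).absolutelyContinuousOnInterval
  have hderiv : ∀ t ∈ Icc a b, ∀ᵐ s, s ∈ uIoc a t → deriv (φ ∘ x) s = ⟪gradient φ (x s), f s⟫ := by
    intro t ht
    have hne : ∀ᵐ s : ℝ, s ≠ b := by simp [ae_iff]
    filter_upwards [hx.ae_hasDerivAt, hne] with s hs hsb hst
    rw [uIoc_of_le ht.1] at hst
    have hφs := (hφ (x s)).hasGradientAt.hasFDerivAt.comp_hasDerivAt s
      (hs ⟨hst.1, (hst.2.trans ht.2).lt_of_ne hsb⟩)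
    rw [hφs.deriv, InnerProductSpace.toDual_apply_apply]
  refine ⟨hac.intervalIntegrable_deriv.congr_ae ?_, fun t ht => ?_⟩
  · exact (ae_restrict_iff' measurableSet_uIoc).2 (hderiv b (right_mem_Icc.2 hab))
  · rw [← intervalIntegral.integral_congr_ae (hderiv t ht),
      (hac.mono (uIcc_subset_uIcc_left (Icc_subset_uIcc ht))).integral_deriv_eq_sub]
    simp only [Function.comp_apply, add_sub_cancel]

end IsPrimitiveOn

end Primitive

section WeakSolution

variable {E : Type*} [NormedAddCommGroup E] [InnerProductSpace ℝ E]

theorem lipschitzOnWith_inner {s : Set E} {u v : E → E} {C V : ℝ} {K L : ℝ≥0}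
    (hu : LipschitzOnWith L u s) (huC : ∀ x ∈ s, ‖u x‖ ≤ C) (hv : LipschitzOnWith K v s)
    (hvV : ∀ x ∈ s, ‖v x‖ ≤ V) :
    LipschitzOnWith (L * V.toNNReal + C.toNNReal * K) (fun x => ⟪u x, v x⟫) s := by
  refine .of_dist_le_mul fun x hx y hy => ?_
  have hsplit : ⟪u x, v x⟫ - ⟪u y, v y⟫ = ⟪u x - u y, v x⟫ + ⟪u y, v x - v y⟫ := by
    rw [inner_sub_left, inner_sub_right, sub_add_sub_cancel]
  rw [Real.dist_eq, hsplit]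
  calc |⟪u x - u y, v x⟫ + ⟪u y, v x - v y⟫|
      ≤ ‖u x - u y‖ * ‖v x‖ + ‖u y‖ * ‖v x - v y‖ :=
        (abs_add_le _ _).trans
          (add_le_add (abs_real_inner_le_norm _ _) (abs_real_inner_le_norm _ _))
    _ ≤ (L * dist x y) * V.toNNReal + C.toNNReal * (K * dist x y) := by
        rw [← dist_eq_norm, ← dist_eq_norm]
        gcongr
        · exact hu.dist_le_mul x hx y hy
        · exact (hvV x hx).trans (Real.le_coe_toNNReal V)
        · exact (huC y hy).trans (Real.le_coe_toNNReal C)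
        · exact hv.dist_le_mul x hx y hy
    _ = ↑(L * V.toNNReal + C.toNNReal * K) * dist x y := by push_cast; ring

variable [CompleteSpace E]

theorem exists_lipschitzWith_gradient {φ : E → ℝ} (hφ : ContDiff ℝ 2 φ)
    (hφc : HasCompactSupport φ) :
    ∃ C K, (∀ x, ‖gradient φ x‖ ≤ C) ∧ LipschitzWith K (gradient φ) := by
  have hD : ContDiff ℝ 1 (fderiv ℝ φ) := hφ.fderiv_right (by norm_num)
  obtain ⟨C, hC⟩ := (hφc.fderiv ℝ).exists_bound_of_continuous hD.continuous
  obtain ⟨K, hK⟩ := hD.lipschitzWith_of_hasCompactSupport (hφc.fderiv ℝ) one_ne_zero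
  refine ⟨C, K, fun x => ?_, fun x y => ?_⟩
  · rw [gradient, LinearIsometryEquiv.norm_map]; exact hC x
  · rw [gradient, gradient, LinearIsometryEquiv.edist_map]; exact hK x y

variable [MeasurableSpace E]

/-- `μ` is a distributional solution of the continuity equation `∂ₜμ + ∇·(v μ) = 0` on `[0, T]`,
tested against `C_c^∞` functions. As in `IsMFSol`, the equation is integrated in time. -/
def IsWeakSol (T : ℝ) (v : ℝ → E → E) (μ : ℝ → Measure E) : Prop :=
  ∀ φ : E → ℝ, ContDiff ℝ (⊤ : ℕ∞) φ → HasCompactSupport φ →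
    IsPrimitiveOn (fun t => ∫ x, φ x ∂(μ t)) (fun s => ∫ x, ⟪gradient φ x, v s x⟫ ∂(μ s)) 0 T

theorem isWeakSol_empMeas {d N : ℕ} {T C : ℝ} (hT : 0 ≤ T)
    {v : ℝ → EuclideanSpace ℝ (Fin d) → EuclideanSpace ℝ (Fin d)}
    {X : ℝ → Fin N → EuclideanSpace ℝ (Fin d)}
    (hX : IsPrimitiveOn X (fun s i => v s (X s i)) 0 T)
    (hC : ∀ s ∈ Icc 0 T, ∀ i, ‖v s (X s i)‖ ≤ C) :
    IsWeakSol T v fun t => empMeas (X t) := by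
  intro φ hφ hφc
  obtain ⟨K, hK⟩ := hφ.lipschitzWith_of_hasCompactSupport hφc (by simp)
  have hparticle : ∀ i, IsPrimitiveOn (fun t => φ (X t i))
      (fun s => ⟪gradient φ (X s i), v s (X s i)⟫) 0 T := fun i =>
    (hX.clm_comp (ContinuousLinearMap.proj (R := ℝ) i)).comp_gradient hT (fun s hs => hC s hs i)
      (hφ.differentiable (by simp)) hK
  have haverage := (IsPrimitiveOn.of_forall_apply (x := fun t i => φ (X t i))
    (f := fun s i => ⟪gradient φ (X s i), v s (X s i)⟫) hparticle).clm_comp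
    ((N : ℝ)⁻¹ • ∑ i, ContinuousLinearMap.proj (R := ℝ) (φ := fun _ : Fin N => ℝ) i)
  simpa [integral_empMeas] using haverage

theorem IsWeakSol.of_tendsto [SecondCountableTopology E] [BorelSpace E] {T r V : ℝ} {K : ℝ≥0}
    (hT : 0 ≤ T) {v : ℝ → E → E} {v' : ℕ → ℝ → E → E} {μ : ℝ → Measure E}
    {μ' : ℕ → ℝ → Measure E} (h : ∀ n, IsWeakSol T (v' n) (μ' n))
    (hμ' : ∀ n, ∀ t ∈ Icc 0 T, IsProbOnBall r (μ' n t))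
    (hμ : ∀ t ∈ Icc 0 T, IsProbOnBall r (μ t))
    (hW : ∀ t ∈ Icc 0 T, Filter.Tendsto (fun n => W1 (μ' n t) (μ t)) Filter.atTop (nhds 0))
    (hv'K : ∀ n, ∀ s ∈ Icc 0 T, LipschitzOnWith K (v' n s) (closedBall 0 r))
    (hv'V : ∀ n, ∀ s ∈ Icc 0 T, ∀ x ∈ closedBall 0 r, ‖v' n s x‖ ≤ V)
    (hvK : ∀ s ∈ Icc 0 T, LipschitzOnWith K (v s) (closedBall 0 r))
    (hvV : ∀ s ∈ Icc 0 T, ∀ x ∈ closedBall 0 r, ‖v s x‖ ≤ V)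
    (hvv' : ∀ s ∈ Icc 0 T,
      TendstoUniformlyOn (fun n => v' n s) (v s) Filter.atTop (closedBall 0 r)) :
    IsWeakSol T v μ := by
  intro φ hφ hφc
  obtain ⟨L, hL⟩ := hφ.lipschitzWith_of_hasCompactSupport hφc (by simp)
  obtain ⟨C, K', hC, hK'⟩ := exists_lipschitzWith_gradient (contDiff_infty.1 hφ 2) hφc
  have hC0 : 0 ≤ C := (norm_nonneg _).trans (hC 0)
  have hinner : ∀ {w : E → E}, LipschitzOnWith K w (closedBall 0 r) →
      (∀ x ∈ closedBall 0 r, ‖w x‖ ≤ V) →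
      LipschitzOnWith (K' * V.toNNReal + C.toNNReal * K) (fun x => ⟪gradient φ x, w x⟫)
        (closedBall 0 r) := fun hwK hwV =>
    lipschitzOnWith_inner hK'.lipschitzOnWith (fun x _ => hC x) hwK hwV
  refine IsPrimitiveOn.of_tendsto hT (fun n => h n φ hφ hφc) (fun t ht => ?_) (fun s hs => ?_)
    (C := C * V) (.of_forall fun n s hs => ?_)
  · exact tendsto_integral_of_tendstoUniformlyOn_of_W1 (hμ' · t ht) (hμ t ht) (hW t ht)
      (fun n => (hμ' n t ht).integrable_of_lipschitzOnWith hL.lipschitzOnWith)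
      hL.lipschitzOnWith fun u hu => .of_forall fun _ _ _ => refl_mem_uniformity hu
  · refine tendsto_integral_of_tendstoUniformlyOn_of_W1 (hμ' · s hs) (hμ s hs) (hW s hs)
      (fun n => (hμ' n s hs).integrable_of_lipschitzOnWith (hinner (hv'K n s hs) (hv'V n s hs)))
      (hinner (hvK s hs) (hvV s hs)) (Metric.tendstoUniformlyOn_iff.2 fun ε hε => ?_)
    filter_upwards [Metric.tendstoUniformlyOn_iff.1 (hvv' s hs) (ε / (C + 1)) (by positivity)]
      with n hn x hx
    calc dist ⟪gradient φ x, v s x⟫ ⟪gradient φ x, v' n s x⟫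
        ≤ C * dist (v s x) (v' n s x) := by
          rw [Real.dist_eq, ← inner_sub_right, dist_eq_norm]
          exact (abs_real_inner_le_norm _ _).trans (by gcongr; exact hC x)
      _ ≤ C * (ε / (C + 1)) := by gcongr; exact (hn x hx).le
      _ < ε := by rw [mul_div_assoc', div_lt_iff₀ (by positivity)]; linarith
  · have := (hμ' n s hs).isProbabilityMeasure
    refine (norm_integral_le_of_norm_le_const (C := C * V) ?_).trans_eq (by simp)
    filter_upwards [(hμ' n s hs).ae_norm_le] with x hx
    exact (abs_real_inner_le_norm _ _).trans (mul_le_mul (hC x)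
      (hv'V n s hs x (mem_closedBall_zero_iff.2 hx)) (norm_nonneg _) hC0)

end WeakSolution

section Lagrangian

theorem ae_norm_le_of_tendsto_Lp {E Ω : Type*} [NormedAddCommGroup E] [MeasurableSpace Ω]
    {P : Measure Ω} {p : ℝ≥0∞} [Fact (1 ≤ p)] {z' : ℕ → Lp E p P} {z : Lp E p P} {r : ℝ}
    (hz : Filter.Tendsto z' Filter.atTop (nhds z)) (hr : ∀ n, ∀ᵐ ω ∂P, ‖z' n ω‖ ≤ r) :
    ∀ᵐ ω ∂P, ‖z ω‖ ≤ r := by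
  obtain ⟨ns, -, hns⟩ := (tendstoInMeasure_of_tendsto_Lp hz).exists_seq_tendsto_ae
  filter_upwards [hns, ae_all_iff.2 hr] with ω hω hrω
  exact le_of_tendsto hω.norm (.of_forall fun n => hrω (ns n))

variable {E Ω : Type*} [NormedAddCommGroup E] [MeasurableSpace E] [MeasurableSpace Ω]
  {P : Measure Ω} {T r V : ℝ} {K : ℝ≥0}

/-- A velocity field depending on a measure and a point which, on measures and points in the
closed ball of radius `r`, is bounded by `V` and Lipschitz with constant `K` for the distance
`W₁ + |·|`. -/
structure IsLipschitzField (r V : ℝ) (K : ℝ≥0) (b : Measure E → E → E) : Prop where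
  norm_le : ∀ μ, IsProbOnBall r μ → ∀ x ∈ closedBall 0 r, ‖b μ x‖ ≤ V
  norm_sub_le : ∀ μ ν, IsProbOnBall r μ → IsProbOnBall r ν → ∀ x ∈ closedBall 0 r,
    ∀ y ∈ closedBall 0 r, ‖b μ x - b ν y‖ ≤ K * (W1 μ ν + ‖x - y‖)

variable [BorelSpace E] [IsProbabilityMeasure P]

theorem IsLipschitzField.lipschitzOnWith [SecondCountableTopology E] {b : Measure E → E → E}
    (hb : IsLipschitzField r V K b) {μ : Measure E} (hμ : IsProbOnBall r μ) :
    LipschitzOnWith K (b μ) (closedBall 0 r) := by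
  have := hμ.isProbabilityMeasure
  refine .of_dist_le_mul fun x hx y hy => ?_
  simpa [dist_eq_norm, W1_self] using hb.norm_sub_le μ μ hμ hμ x hx y hy

theorem IsLipschitzField.norm_sub_le_L1 [SecondCountableTopology E]
    {b₁ b₂ : Measure E → E → E} {ε : ℝ} (hb : IsLipschitzField r V K b₁)
    (hε : ∀ μ, IsProbOnBall r μ → ∀ x ∈ closedBall 0 r, ‖b₁ μ x - b₂ μ x‖ ≤ ε)
    {z w f g : Ω →₁[P] E} (hz : ∀ᵐ ω ∂P, ‖z ω‖ ≤ r) (hw : ∀ᵐ ω ∂P, ‖w ω‖ ≤ r)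
    (hf : f =ᵐ[P] fun ω => b₁ (P.map z) (z ω)) (hg : g =ᵐ[P] fun ω => b₂ (P.map w) (w ω)) :
    ‖f - g‖ ≤ 2 * K * ‖z - w‖ + ε := by
  have hzw : Integrable (fun ω => ‖z ω - w ω‖) P :=
    ((L1.integrable_coeFn z).sub (L1.integrable_coeFn w)).norm
  have hbound : Integrable (fun ω => K * (W1 (P.map z) (P.map w) + ‖z ω - w ω‖)) P :=
    ((integrable_const _).add hzw).const_mul _
  have hpointwise : ∀ᵐ ω ∂P, ‖f ω - g ω‖ ≤ K * (W1 (P.map z) (P.map w) + ‖z ω - w ω‖) + ε := by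
    filter_upwards [hz, hw, hf, hg] with ω hzω hwω hfω hgω
    have hzω := mem_closedBall_zero_iff.2 hzω
    have hwω := mem_closedBall_zero_iff.2 hwω
    have hlawz := isProbOnBall_map (Lp.aestronglyMeasurable _).aemeasurable hz
    have hlaww := isProbOnBall_map (Lp.aestronglyMeasurable _).aemeasurable hw
    rw [hfω, hgω]
    exact (norm_sub_le_norm_sub_add_norm_sub _ (b₁ (P.map w) (w ω)) _).trans
      (add_le_add (hb.norm_sub_le _ _ hlawz hlaww _ hzω _ hwω) (hε _ hlaww _ hwω))
  rw [← dist_eq_norm, ← dist_eq_norm, L1.dist_eq_integral_dist]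
  simp only [dist_eq_norm (f _)]
  calc ∫ ω, ‖f ω - g ω‖ ∂P
      ≤ ∫ ω, (K * (W1 (P.map z) (P.map w) + ‖z ω - w ω‖) + ε) ∂P :=
        integral_mono_ae ((L1.integrable_coeFn f).sub (L1.integrable_coeFn g)).norm
          (hbound.add (integrable_const ε)) hpointwise
    _ = K * (W1 (P.map z) (P.map w) + dist z w) + ε := by
        rw [integral_add hbound (integrable_const ε), integral_const_mul,
          integral_add (integrable_const _) hzw, L1.dist_eq_integral_dist]
        simp [dist_eq_norm]
    _ ≤ K * (dist z w + dist z w) + ε := by gcongr; exact W1_map_L1_le z w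
    _ = 2 * K * dist z w + ε := by ring

variable [NormedSpace ℝ E]

/-- A random curve `z`, seen as a curve in `L¹(P; E)`, whose velocity `v` is the field `b`
evaluated at the law of `z` and at `z` itself, and which stays in the ball of radius `r`. -/
structure IsLagrangianSol (P : Measure Ω) (b : ℝ → Measure E → E → E) (T r : ℝ)
    (z v : ℝ → Ω →₁[P] E) : Prop where
  isPrimitiveOn : IsPrimitiveOn z v 0 T
  ae_eq : ∀ s ∈ Icc 0 T, v s =ᵐ[P] fun ω => b s (P.map (z s)) (z s ω)
  ae_norm_le : ∀ t ∈ Icc 0 T, ∀ᵐ ω ∂P, ‖z t ω‖ ≤ r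

namespace IsLagrangianSol

variable {b b₁ b₂ : ℝ → Measure E → E → E} {z v z₁ v₁ z₂ v₂ : ℝ → Ω →₁[P] E}

theorem norm_velocity_le (hz : IsLagrangianSol P b T r z v)
    (hb : ∀ s ∈ Icc 0 T, IsLipschitzField r V K (b s)) : ∀ s ∈ Icc 0 T, ‖v s‖ ≤ V := by
  intro s hs
  rw [L1.norm_eq_integral_norm]
  refine (integral_mono_ae (L1.integrable_coeFn _).norm (integrable_const V) ?_).trans_eq (by simp)
  filter_upwards [hz.ae_eq s hs, hz.ae_norm_le s hs] with ω hv hω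
  rw [hv]
  exact (hb s hs).norm_le _
    (isProbOnBall_map (Lp.aestronglyMeasurable _).aemeasurable (hz.ae_norm_le s hs)) _
    (mem_closedBall_zero_iff.2 hω)

theorem norm_sub_le [SecondCountableTopology E] (h₁ : IsLagrangianSol P b₁ T r z₁ v₁)
    (h₂ : IsLagrangianSol P b₂ T r z₂ v₂) (hb : ∀ s ∈ Icc 0 T, IsLipschitzField r V K (b₁ s))
    {ε : ℝ} (hε₀ : 0 ≤ ε)
    (hε : ∀ s ∈ Icc 0 T, ∀ μ, IsProbOnBall r μ → ∀ x ∈ closedBall 0 r,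
      ‖b₁ s μ x - b₂ s μ x‖ ≤ ε) :
    ∀ t ∈ Icc 0 T, ‖z₁ t - z₂ t‖ ≤ (‖z₁ 0 - z₂ 0‖ + ε * T) * Real.exp (2 * K * T) := by
  intro t ht
  have hgronwall := (h₁.isPrimitiveOn.sub h₂.isPrimitiveOn).norm_le (K := 2 * K) (by positivity) hε₀
    (fun s hs => (hb s hs).norm_sub_le_L1 (hε s hs) (h₁.ae_norm_le s hs) (h₂.ae_norm_le s hs)
      (h₁.ae_eq s hs) (h₂.ae_eq s hs)) ht
  simpa only [sub_zero] using hgronwall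

theorem exists_tendstoUniformlyOn [SecondCountableTopology E] [CompleteSpace E]
    {b' : ℕ → ℝ → Measure E → E → E}
    {z' v' : ℕ → ℝ → Ω →₁[P] E} {z₀ : Ω →₁[P] E} (hT : 0 ≤ T)
    (h : ∀ n, IsLagrangianSol P (b' n) T r (z' n) (v' n))
    (hb' : ∀ n, ∀ s ∈ Icc 0 T, IsLipschitzField r V K (b' n s))
    (hbb' : ∀ ε > 0, ∀ᶠ n in Filter.atTop, ∀ s ∈ Icc 0 T, ∀ μ, IsProbOnBall r μ →
      ∀ x ∈ closedBall 0 r, ‖b' n s μ x - b s μ x‖ ≤ ε)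
    (hz₀ : Filter.Tendsto (fun n => z' n 0) Filter.atTop (nhds z₀)) :
    ∃ z, TendstoUniformlyOn z' z Filter.atTop (Icc 0 T) := by
  set C : ℝ := (1 + T) * Real.exp (2 * K * T) with hC
  have : 0 < C := by positivity
  have hcauchy : UniformCauchySeqOn z' Filter.atTop (Icc 0 T) := by
    refine Metric.uniformCauchySeqOn_iff.2 fun ε hε => ?_
    set δ : ℝ := ε / (4 * C) with hδ
    have hδ₀ : 0 < δ := by positivity
    obtain ⟨n₀, hn₀⟩ := Filter.eventually_atTop.1
      ((Metric.tendsto_nhds.1 hz₀ δ hδ₀).and (hbb' δ hδ₀))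
    refine ⟨n₀, fun m hm n hn t ht => ?_⟩
    have hfields : ∀ s ∈ Icc 0 T, ∀ μ, IsProbOnBall r μ → ∀ x ∈ closedBall 0 r,
        ‖b' m s μ x - b' n s μ x‖ ≤ δ + δ := fun s hs μ hμ x hx =>
      (norm_sub_le_norm_sub_add_norm_sub _ (b s μ x) _).trans (add_le_add
        ((hn₀ m hm).2 s hs μ hμ x hx) (norm_sub_rev (b s μ x) _ ▸ (hn₀ n hn).2 s hs μ hμ x hx))
    have hinit : ‖z' m 0 - z' n 0‖ ≤ δ + δ := by
      rw [← dist_eq_norm]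
      exact (dist_triangle_right _ _ z₀).trans (add_le_add (hn₀ m hm).1.le (hn₀ n hn).1.le)
    calc dist (z' m t) (z' n t)
        ≤ (‖z' m 0 - z' n 0‖ + (δ + δ) * T) * Real.exp (2 * K * T) := by
          rw [dist_eq_norm]
          exact (h m).norm_sub_le (h n) (hb' m) (by positivity) hfields t ht
      _ ≤ (δ + δ + (δ + δ) * T) * Real.exp (2 * K * T) := by gcongr
      _ = ε / 2 := by rw [hδ, hC]; field_simp; ring
      _ < ε := half_lt_self hε
  choose! z hz using fun t (ht : t ∈ Icc 0 T) =>
    cauchySeq_tendsto_of_complete (hcauchy.cauchySeq ht)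
  exact ⟨z, hcauchy.tendstoUniformlyOn_of_tendsto hz⟩

end IsLagrangianSol

end Lagrangian

section RandomParticle

theorem integrable_comp_measurable {E Ω ι : Type*} [NormedAddCommGroup E] [MeasurableSpace Ω]
    [Finite ι] [MeasurableSpace ι] [DiscreteMeasurableSpace ι] (P : Measure Ω) [IsFiniteMeasure P]
    {ξ : Ω → ι} (hξ : Measurable ξ) (X : ι → E) : Integrable (fun ω => X (ξ ω)) P := by
  cases nonempty_fintype ι
  exact .of_bound
    ((StronglyMeasurable.of_discrete (f := X)).comp_measurable hξ).aestronglyMeasurable ‖X‖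
    (ae_of_all _ fun ω => norm_le_pi_norm X (ξ ω))

variable {E Ω ι : Type*} [NormedAddCommGroup E] [NormedSpace ℝ E] [MeasurableSpace Ω] [Fintype ι]
  [MeasurableSpace ι] [DiscreteMeasurableSpace ι] {ξ : Ω → ι}

/-- The random point `X_ξ` of a finite family `X`, as an element of `L¹(P; E)` depending linearly
on `X`: a particle drawn at random, followed along the motion of the whole family. -/
def randomParticle (P : Measure Ω) [IsProbabilityMeasure P] (hξ : Measurable ξ) :
    (ι → E) →L[ℝ] Ω →₁[P] E :=
  LinearMap.mkContinuous
    { toFun := fun X => (integrable_comp_measurable P hξ X).toL1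
      map_add' := fun _ _ => rfl
      map_smul' := fun _ _ => rfl } 1 fun X => by
    change ‖(integrable_comp_measurable P hξ X).toL1‖ ≤ _
    rw [L1.norm_of_fun_eq_integral_norm]
    refine (integral_mono (integrable_comp_measurable P hξ X).norm (integrable_const ‖X‖)
      fun ω => norm_le_pi_norm X (ξ ω)).trans_eq (by simp)

variable {P : Measure Ω} [IsProbabilityMeasure P]

theorem coeFn_randomParticle (hξ : Measurable ξ) (X : ι → E) :
    randomParticle P hξ X =ᵐ[P] fun ω => X (ξ ω) :=
  (integrable_comp_measurable P hξ X).coeFn_toL1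

theorem map_randomParticle [MeasurableSpace E] (hξ : Measurable ξ) (X : ι → E) :
    P.map (randomParticle P hξ X) = (P.map ξ).map X := by
  rw [Measure.map_congr (coeFn_randomParticle hξ X), Measure.map_map .of_discrete hξ]
  rfl

theorem exists_tendsto_randomParticle {E : Type*} [NormedAddCommGroup E] [NormedSpace ℝ E]
    [CompleteSpace E] [SecondCountableTopology E] [MeasurableSpace E] [BorelSpace E]
    {ι : ℕ → Type*} [∀ n, Fintype (ι n)] [∀ n, Nonempty (ι n)] [∀ n, MeasurableSpace (ι n)]
    [∀ n, DiscreteMeasurableSpace (ι n)] {υ : ∀ n, Measure (ι n)} [∀ n, IsProbabilityMeasure (υ n)]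
    {X : ∀ n, ι n → E} {μ : Measure E} {r : ℝ} (hμ : IsProbOnBall r μ)
    (hW : Filter.Tendsto (fun n => W1 ((υ n).map (X n)) μ) Filter.atTop (nhds 0)) :
    ∃ (P : Measure ((E × unitInterval) × unitInterval)) (_ : IsProbabilityMeasure P)
      (ξ : ∀ n, (E × unitInterval) × unitInterval → ι n) (hξ : ∀ n, Measurable (ξ n))
      (z : (E × unitInterval) × unitInterval →₁[P] E),
      (∀ n, P.map (ξ n) = υ n) ∧ P.map z = μ ∧
      Filter.Tendsto (fun n => randomParticle P (hξ n) (X n)) Filter.atTop (nhds z) := by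
  have := hμ.isProbabilityMeasure
  choose ξ hξ hυ hlt using fun n : ℕ =>
    exists_random_index (υ := υ n) (.of_discrete : Measurable (X n)) μ
      (Nat.one_div_pos_of_nat (α := ℝ) (n := n))
  set P := (μ.prod (volume : Measure unitInterval)).prod (volume : Measure unitInterval)
  have hfst : P.map (fun ω => ω.1.1) = μ := by
    rw [show (fun ω : (E × unitInterval) × unitInterval => ω.1.1) = Prod.fst ∘ Prod.fst from rfl,
      ← Measure.map_map measurable_fst measurable_fst, Measure.map_fst_prod, Measure.map_smul,
      Measure.map_fst_prod]
    simp
  have hint : Integrable (fun ω : (E × unitInterval) × unitInterval => ω.1.1) P := by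
    have hid := hμ.integrable_of_lipschitzOnWith LipschitzWith.id.lipschitzOnWith
    rw [← hfst] at hid
    exact hid.comp_measurable (by fun_prop)
  refine ⟨P, inferInstance, ξ, hξ, hint.toL1, hυ, ?_, ?_⟩
  · rw [Measure.map_congr hint.coeFn_toL1, hfst]
  · have hbound : ∀ n, dist (randomParticle P (hξ n) (X n)) hint.toL1 ≤
        W1 ((υ n).map (X n)) μ + 1 / ((n : ℝ) + 1) := fun n => by
      refine (le_of_eq ?_).trans (hlt n).le
      rw [L1.dist_eq_integral_dist]
      refine integral_congr_ae ?_
      filter_upwards [coeFn_randomParticle (hξ n) (X n), hint.coeFn_toL1] with ω h₁ h₂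
      rw [h₁, h₂]
    refine tendsto_iff_dist_tendsto_zero.2 (squeeze_zero (fun _ => dist_nonneg) hbound ?_)
    simpa using hW.add tendsto_one_div_add_atTop_nhds_zero_nat

theorem isLagrangianSol_randomParticle {d N : ℕ} {T r : ℝ} {ξ : Ω → Fin N}
    {b : ℝ → Measure (EuclideanSpace ℝ (Fin d)) → EuclideanSpace ℝ (Fin d) →
      EuclideanSpace ℝ (Fin d)}
    {X : ℝ → Fin N → EuclideanSpace ℝ (Fin d)} (hξ : Measurable ξ)
    (hP : P.map ξ = ProbabilityTheory.uniformOn univ)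
    (hX : IsPrimitiveOn X (fun s i => b s (empMeas (X s)) (X s i)) 0 T)
    (hr : ∀ t ∈ Icc 0 T, ∀ i, ‖X t i‖ ≤ r) :
    IsLagrangianSol P b T r (fun t => randomParticle P hξ (X t))
      (fun s => randomParticle P hξ fun i => b s (empMeas (X s)) (X s i)) where
  isPrimitiveOn := hX.clm_comp (randomParticle P hξ)
  ae_eq s _ := by
    rw [map_randomParticle, hP, ← empMeas_eq_map_uniformOn]
    filter_upwards [coeFn_randomParticle hξ (X s),
      coeFn_randomParticle (P := P) hξ fun i => b s (empMeas (X s)) (X s i)] with ω h₁ h₂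
    rw [h₁, h₂]
  ae_norm_le t ht := by
    filter_upwards [coeFn_randomParticle hξ (X t)] with ω hω
    rw [hω]
    exact hr t ht (ξ ω)

end RandomParticle

section MeanFieldLimit

theorem IsLipschitzField.tendstoUniformlyOn {E : Type*} [NormedAddCommGroup E] [MeasurableSpace E]
    {r V : ℝ} {K : ℝ≥0} {b : Measure E → E → E} {b' : ℕ → Measure E → E → E}
    {μ : Measure E} {μ' : ℕ → Measure E} (hb : IsLipschitzField r V K b)
    (hbb' : ∀ ε > 0, ∀ᶠ n in Filter.atTop, ∀ μ, IsProbOnBall r μ → ∀ x ∈ closedBall 0 r,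
      ‖b' n μ x - b μ x‖ ≤ ε)
    (hμ' : ∀ n, IsProbOnBall r (μ' n)) (hμ : IsProbOnBall r μ)
    (hW : Filter.Tendsto (fun n => W1 (μ' n) μ) Filter.atTop (nhds 0)) :
    TendstoUniformlyOn (fun n => b' n (μ' n)) (b μ) Filter.atTop (closedBall 0 r) := by
  refine Metric.tendstoUniformlyOn_iff.2 fun ε hε => ?_
  filter_upwards [hbb' (ε / 2) (half_pos hε),
    hW.eventually_lt_const (show 0 < ε / (2 * (K + 1)) by positivity)] with n hn hWn x hx
  rw [dist_comm, dist_eq_norm]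
  calc ‖b' n (μ' n) x - b μ x‖
      ≤ ‖b' n (μ' n) x - b (μ' n) x‖ + ‖b (μ' n) x - b μ x‖ :=
        norm_sub_le_norm_sub_add_norm_sub _ _ _
    _ ≤ ε / 2 + K * W1 (μ' n) μ := by
        gcongr
        · exact hn _ (hμ' n) x hx
        · simpa using hb.norm_sub_le _ _ (hμ' n) hμ x hx x hx
    _ ≤ ε / 2 + K * (ε / (2 * (K + 1))) := by gcongr
    _ < ε := by
        have : K * (ε / (2 * (K + 1))) < ε / 2 := by
          rw [mul_div_assoc', div_lt_div_iff₀ (by positivity) two_pos]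
          linarith
        linarith

variable {d : ℕ} {T r V : ℝ} {K : ℝ≥0}
  {b : ℝ → Measure (EuclideanSpace ℝ (Fin d)) → EuclideanSpace ℝ (Fin d) → EuclideanSpace ℝ (Fin d)}
  {b' : ℕ → ℝ → Measure (EuclideanSpace ℝ (Fin d)) → EuclideanSpace ℝ (Fin d) →
    EuclideanSpace ℝ (Fin d)}
  {N : ℕ → ℕ} {X : ∀ n, ℝ → Fin (N n) → EuclideanSpace ℝ (Fin d)}
  {μ₀ : Measure (EuclideanSpace ℝ (Fin d))}

theorem IsWeakSol.of_tendsto_empMeas [∀ n, NeZero (N n)]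
    {μ : ℝ → Measure (EuclideanSpace ℝ (Fin d))} (hT : 0 ≤ T)
    (hb : ∀ s ∈ Icc 0 T, IsLipschitzField r V K (b s))
    (hb' : ∀ n, ∀ s ∈ Icc 0 T, IsLipschitzField r V K (b' n s))
    (hbb' : ∀ ε > 0, ∀ᶠ n in Filter.atTop, ∀ s ∈ Icc 0 T, ∀ μ, IsProbOnBall r μ →
      ∀ x ∈ closedBall 0 r, ‖b' n s μ x - b s μ x‖ ≤ ε)
    (hX : ∀ n, IsPrimitiveOn (X n) (fun s i => b' n s (empMeas (X n s)) (X n s i)) 0 T)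
    (hr : ∀ n, ∀ t ∈ Icc 0 T, ∀ i, ‖X n t i‖ ≤ r)
    (hμ : ∀ t ∈ Icc 0 T, IsProbOnBall r (μ t))
    (hW : ∀ t ∈ Icc 0 T,
      Filter.Tendsto (fun n => W1 (empMeas (X n t)) (μ t)) Filter.atTop (nhds 0)) :
    IsWeakSol T (fun s => b s (μ s)) μ := by
  have hemp : ∀ n, ∀ t ∈ Icc 0 T, IsProbOnBall r (empMeas (X n t)) := fun n t ht =>
    isProbOnBall_empMeas (hr n t ht)
  refine .of_tendsto (v' := fun n s => b' n s (empMeas (X n s))) hT (fun n => ?_) hemp hμ hW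
    (fun n s hs => (hb' n s hs).lipschitzOnWith (hemp n s hs))
    (fun n s hs => (hb' n s hs).norm_le _ (hemp n s hs))
    (fun s hs => (hb s hs).lipschitzOnWith (hμ s hs))
    (fun s hs => (hb s hs).norm_le _ (hμ s hs)) fun s hs => ?_
  · exact isWeakSol_empMeas hT (hX n) fun s hs i =>
      (hb' n s hs).norm_le _ (hemp n s hs) _ (mem_closedBall_zero_iff.2 (hr n s hs i))
  · exact (hb s hs).tendstoUniformlyOn (fun ε hε => (hbb' ε hε).mono fun n hn => hn s hs)
      (hemp · s hs) (hμ s hs) (hW s hs)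

theorem exists_meanField_limit [∀ n, NeZero (N n)] (hT : 0 ≤ T)
    (hb : ∀ s ∈ Icc 0 T, IsLipschitzField r V K (b s))
    (hb' : ∀ n, ∀ s ∈ Icc 0 T, IsLipschitzField r V K (b' n s))
    (hbb' : ∀ ε > 0, ∀ᶠ n in Filter.atTop, ∀ s ∈ Icc 0 T, ∀ μ, IsProbOnBall r μ →
      ∀ x ∈ closedBall 0 r, ‖b' n s μ x - b s μ x‖ ≤ ε)
    (hX : ∀ n, IsPrimitiveOn (X n) (fun s i => b' n s (empMeas (X n s)) (X n s i)) 0 T)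
    (hr : ∀ n, ∀ t ∈ Icc 0 T, ∀ i, ‖X n t i‖ ≤ r) (hμ₀ : IsProbOnBall r μ₀)
    (hW : Filter.Tendsto (fun n => W1 (empMeas (X n 0)) μ₀) Filter.atTop (nhds 0)) :
    ∃ μ : ℝ → Measure (EuclideanSpace ℝ (Fin d)), μ 0 = μ₀ ∧
      (∀ t ∈ Icc 0 T, IsProbOnBall r (μ t)) ∧
      (∀ s ∈ Icc 0 T, ∀ t ∈ Icc 0 T, W1 (μ s) (μ t) ≤ V * |s - t|) ∧
      (∀ ε > 0, ∀ᶠ n in Filter.atTop, ∀ t ∈ Icc 0 T, W1 (empMeas (X n t)) (μ t) < ε) ∧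
      IsWeakSol T (fun s => b s (μ s)) μ := by
  have h0 : (0 : ℝ) ∈ Icc 0 T := left_mem_Icc.2 hT
  simp only [empMeas_eq_map_uniformOn] at hW
  obtain ⟨P, _, ξ, hξ, z₀, hlaw, hz₀, hlim₀⟩ := exists_tendsto_randomParticle hμ₀ hW
  have hsol : ∀ n, IsLagrangianSol P (b' n) T r _ _ := fun n =>
    isLagrangianSol_randomParticle (hξ n) (hlaw n) (hX n) (hr n)
  obtain ⟨z, hz⟩ := IsLagrangianSol.exists_tendstoUniformlyOn hT hsol hb' hbb' hlim₀
  have hμ : ∀ t ∈ Icc 0 T, IsProbOnBall r (P.map (z t)) := fun t ht =>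
    isProbOnBall_map (Lp.aestronglyMeasurable _).aemeasurable
      (ae_norm_le_of_tendsto_Lp (hz.tendsto_at ht) fun n => (hsol n).ae_norm_le t ht)
  have hconv : ∀ ε > 0, ∀ᶠ n in Filter.atTop, ∀ t ∈ Icc 0 T,
      W1 (empMeas (X n t)) (P.map (z t)) < ε := fun ε hε => by
    filter_upwards [Metric.tendstoUniformlyOn_iff.1 hz ε hε] with n hn t ht
    rw [empMeas_eq_map_uniformOn, ← hlaw n, ← map_randomParticle (hξ n)]
    exact (W1_map_L1_le _ _).trans_lt (dist_comm (z t) _ ▸ hn t ht)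
  refine ⟨fun t => P.map (z t), ?_, hμ, fun s hs t ht => ?_, hconv, ?_⟩
  · simpa only [tendsto_nhds_unique (hz.tendsto_at h0) hlim₀] using hz₀
  · refine (W1_map_L1_le _ _).trans (le_of_tendsto ((hz.tendsto_at hs).dist (hz.tendsto_at ht))
      (.of_forall fun n => ?_))
    rw [dist_eq_norm]
    exact (hsol n).isPrimitiveOn.norm_sub_le ((hsol n).norm_velocity_le (hb' n)) ht hs
  · refine IsWeakSol.of_tendsto_empMeas hT hb hb' hbb' hX hr hμ fun t ht =>
      Metric.tendsto_nhds.2 fun ε hε => (hconv ε hε).mono fun n hn => ?_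
    rw [Real.dist_0_eq_abs, abs_of_nonneg (W1_nonneg _ _)]
    exact hn t ht

end MeanFieldLimit

section VelocityField

theorem norm_inv_smul_sum_le {F : Type*} [NormedAddCommGroup F] [NormedSpace ℝ F] {m : ℕ}
    {v : Fin m → F} {c : ℝ} (hc : 0 ≤ c) (hv : ∀ k, ‖v k‖ ≤ c) :
    ‖(m : ℝ)⁻¹ • ∑ k, v k‖ ≤ c := by
  rw [norm_smul, Real.norm_of_nonneg (by positivity)]
  calc (m : ℝ)⁻¹ * ‖∑ k, v k‖ ≤ (m : ℝ)⁻¹ * (m * c) := by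
        gcongr
        simpa using norm_sum_le_of_le Finset.univ fun k _ => hv k
    _ ≤ c := by
        rw [← mul_assoc]
        exact mul_le_of_le_one_left hc inv_mul_le_one

theorem norm_sum_inv_smul_sum_smul_le {d m : ℕ} {F : Type*} [NormedAddCommGroup F]
    [NormedSpace ℝ F] (u : Fin m → EuclideanSpace ℝ (Fin d)) {g : Fin d → Fin m → F} {c : ℝ}
    (hc : 0 ≤ c) (hg : ∀ ℓ k, ‖g ℓ k‖ ≤ c) :
    ‖∑ ℓ, (m : ℝ)⁻¹ • ∑ k, u k ℓ • g ℓ k‖ ≤ d * (‖u‖ * c) := by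
  refine (norm_sum_le_of_le Finset.univ fun ℓ _ =>
    norm_inv_smul_sum_le (c := ‖u‖ * c) (by positivity) fun k => ?_).trans_eq (by simp)
  rw [norm_smul]
  gcongr
  · exact (PiLp.norm_apply_le (u k) ℓ).trans (norm_le_pi_norm u k)
  · exact hg ℓ k

theorem norm_convolution_sub_convolution_le {E F : Type*} [NormedAddCommGroup E]
    [SecondCountableTopology E] [MeasurableSpace E] [BorelSpace E] [NormedAddCommGroup F]
    [NormedSpace ℝ F] {H : E → F} {K : ℝ≥0} {r : ℝ} {μ ν : Measure E} {x y : E}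
    (hH : LipschitzOnWith K H (closedBall 0 (r + r))) (hμ : IsProbOnBall r μ)
    (hν : IsProbOnBall r ν) (hx : x ∈ closedBall 0 r) (hy : y ∈ closedBall 0 r) :
    ‖∫ ξ, H (x - ξ) ∂μ - ∫ ξ, H (y - ξ) ∂ν‖ ≤ K * (W1 μ ν + ‖x - y‖) := by
  have := hν.isProbabilityMeasure
  have hmem : ∀ {z ξ : E}, z ∈ closedBall 0 r → ξ ∈ closedBall 0 r →
      z - ξ ∈ closedBall 0 (r + r) := fun hz hξ => by
    rw [mem_closedBall_zero_iff] at hz hξ ⊢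
    exact (norm_sub_le _ _).trans (add_le_add hz hξ)
  have hLip : ∀ {z : E}, z ∈ closedBall 0 r →
      LipschitzOnWith K (fun ξ => H (z - ξ)) (closedBall 0 r) := fun hz =>
    .of_dist_le_mul fun ξ hξ η hη => by
      simpa only [dist_sub_left] using hH.dist_le_mul _ (hmem hz hξ) _ (hmem hz hη)
  have hshift : ‖∫ ξ, H (x - ξ) ∂ν - ∫ ξ, H (y - ξ) ∂ν‖ ≤ K * ‖x - y‖ := by
    rw [← integral_sub (hν.integrable_of_lipschitzOnWith (hLip hx))
      (hν.integrable_of_lipschitzOnWith (hLip hy))]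
    refine (norm_integral_le_of_norm_le_const (C := K * ‖x - y‖) ?_).trans_eq (by simp)
    filter_upwards [hν.ae_norm_le] with ξ hξ
    have hξ := mem_closedBall_zero_iff.2 hξ
    simpa using hH.norm_sub_le (hmem hx hξ) (hmem hy hξ)
  calc ‖∫ ξ, H (x - ξ) ∂μ - ∫ ξ, H (y - ξ) ∂ν‖ ≤ K * W1 μ ν + K * ‖x - y‖ :=
        (norm_sub_le_norm_sub_add_norm_sub _ _ _).trans
          (add_le_add (norm_integral_sub_integral_le_W1 hμ hν (hLip hx)) hshift)
    _ = K * (W1 μ ν + ‖x - y‖) := by ring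

variable {d m : ℕ} {H : EuclideanSpace ℝ (Fin d) → EuclideanSpace ℝ (Fin d)}
  {G : Fin d → EuclideanSpace ℝ (Fin d) → EuclideanSpace ℝ (Fin d)} {C M r : ℝ}

theorem mfField_empMeas {N : ℕ} (u Y : Fin m → EuclideanSpace ℝ (Fin d))
    (X : Fin N → EuclideanSpace ℝ (Fin d)) (i : Fin N) :
    mfField H G (empMeas X) u Y (X i) = finRHS H G u Y X i := by
  rw [mfField, integral_empMeas, finRHS]

theorem norm_mfField_le (hH : ∀ x, ‖H x‖ ≤ C * (1 + ‖x‖)) (hG : ∀ ℓ x, ‖G ℓ x‖ ≤ C * (1 + ‖x‖))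
    {μ : Measure (EuclideanSpace ℝ (Fin d))} (hμ : IsProbOnBall r μ)
    {u Y : Fin m → EuclideanSpace ℝ (Fin d)} (hu : ‖u‖ ≤ M) {x : EuclideanSpace ℝ (Fin d)}
    (hx : ‖x‖ ≤ r) :
    ‖mfField H G μ u Y x‖ ≤ C * (1 + 2 * r) + d * (M * (C * (1 + r + ‖Y‖))) := by
  have := hμ.isProbabilityMeasure
  have hr := hμ.nonneg
  have hC : 0 ≤ C := by simpa using (norm_nonneg _).trans (hH 0)
  have hbound : ∀ {ξ : EuclideanSpace ℝ (Fin d)} {ρ : ℝ}, ‖ξ‖ ≤ ρ →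
      C * (1 + ‖x - ξ‖) ≤ C * (1 + r + ρ) := fun hξ => by
    rw [add_assoc]
    gcongr
    exact (norm_sub_le _ _).trans (add_le_add hx hξ)
  have hH' : ‖∫ ξ, H (x - ξ) ∂μ‖ ≤ C * (1 + 2 * r) := by
    refine (norm_integral_le_of_norm_le_const (C := C * (1 + r + r)) ?_).trans_eq ?_
    · filter_upwards [hμ.ae_norm_le] with ξ hξ using (hH _).trans (hbound hξ)
    · simp only [probReal_univ]; ring
  refine norm_add_le_of_le hH' ((norm_sum_inv_smul_sum_smul_le u
    (c := C * (1 + r + ‖Y‖)) (by positivity)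
    fun ℓ k => (hG ℓ _).trans (hbound (norm_le_pi_norm Y k))).trans ?_)
  gcongr

theorem norm_leaderForce_sub_leaderForce_le {K : ℝ≥0} {B : ℝ}
    (hG : ∀ ℓ, LipschitzOnWith K (G ℓ) (closedBall 0 (r + r)))
    (hGB : ∀ ℓ, ∀ x ∈ closedBall 0 (r + r), ‖G ℓ x‖ ≤ B) (hB : 0 ≤ B)
    {u u' Y Y' : Fin m → EuclideanSpace ℝ (Fin d)} (hu' : ‖u'‖ ≤ M) (hY : ‖Y‖ ≤ r)
    (hY' : ‖Y'‖ ≤ r) {x y : EuclideanSpace ℝ (Fin d)} (hx : ‖x‖ ≤ r) (hy : ‖y‖ ≤ r) :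
    ‖∑ ℓ, (m : ℝ)⁻¹ • ∑ k, u k ℓ • G ℓ (x - Y k) -
        ∑ ℓ, (m : ℝ)⁻¹ • ∑ k, u' k ℓ • G ℓ (y - Y' k)‖ ≤
      d * (‖u - u'‖ * B) + d * (M * (K * (‖x - y‖ + ‖Y - Y'‖))) := by
  have hmem : ∀ {z : EuclideanSpace ℝ (Fin d)} {Z : Fin m → EuclideanSpace ℝ (Fin d)},
      ‖z‖ ≤ r → ‖Z‖ ≤ r → ∀ k, z - Z k ∈ closedBall 0 (r + r) := fun hz hZ k =>
    mem_closedBall_zero_iff.2 ((norm_sub_le _ _).trans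
      (add_le_add hz ((norm_le_pi_norm _ k).trans hZ)))
  have hsplit : ∑ ℓ, (m : ℝ)⁻¹ • ∑ k, u k ℓ • G ℓ (x - Y k) -
        ∑ ℓ, (m : ℝ)⁻¹ • ∑ k, u' k ℓ • G ℓ (y - Y' k) =
      ∑ ℓ, (m : ℝ)⁻¹ • ∑ k, (u - u') k ℓ • G ℓ (x - Y k) +
        ∑ ℓ, (m : ℝ)⁻¹ • ∑ k, u' k ℓ • (G ℓ (x - Y k) - G ℓ (y - Y' k)) := by
    simp only [Pi.sub_apply, PiLp.sub_apply, sub_smul, smul_sub, Finset.sum_sub_distrib]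
    abel
  rw [hsplit]
  refine norm_add_le_of_le (norm_sum_inv_smul_sum_smul_le _ hB fun ℓ k => hGB ℓ _ (hmem hx hY k))
    ((norm_sum_inv_smul_sum_smul_le u' (c := K * (‖x - y‖ + ‖Y - Y'‖)) (by positivity)
      fun ℓ k => ?_).trans (by gcongr))
  refine ((hG ℓ).norm_sub_le (hmem hx hY k) (hmem hy hY' k)).trans ?_
  rw [sub_sub_sub_comm]
  gcongr
  exact norm_sub_le_of_le le_rfl (norm_le_pi_norm (Y - Y') k)

theorem exists_norm_mfField_sub_le (hH : LocallyLipschitz H) (hG : ∀ ℓ, LocallyLipschitz (G ℓ))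
    (hM : 0 ≤ M) (r : ℝ) :
    ∃ L : ℝ≥0, ∀ μ ν, IsProbOnBall r μ → IsProbOnBall r ν →
      ∀ x ∈ closedBall 0 r, ∀ y ∈ closedBall 0 r,
      ∀ u u' Y Y' : Fin m → EuclideanSpace ℝ (Fin d), ‖u'‖ ≤ M → ‖Y‖ ≤ r → ‖Y'‖ ≤ r →
        ‖mfField H G μ u Y x - mfField H G ν u' Y' y‖ ≤
          L * (W1 μ ν + ‖x - y‖ + ‖u - u'‖ + ‖Y - Y'‖) := by
  have hcompact := isCompact_closedBall (0 : EuclideanSpace ℝ (Fin d)) (r + r)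
  obtain ⟨K, hK⟩ := hH.locallyLipschitzOn.exists_lipschitzOnWith_of_compact hcompact
  choose K' hK' using fun ℓ =>
    (hG ℓ).locallyLipschitzOn.exists_lipschitzOnWith_of_compact hcompact
  have hsup : ∀ ℓ, LipschitzOnWith (Finset.univ.sup K') (G ℓ) (closedBall 0 (r + r)) := fun ℓ =>
    (hK' ℓ).weaken (Finset.le_sup (Finset.mem_univ ℓ))
  obtain ⟨B, hB⟩ := hcompact.exists_bound_of_continuousOn
    (continuous_pi fun ℓ => (hG ℓ).continuous).continuousOn
  lift M to ℝ≥0 using hM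
  refine ⟨K + d * B.toNNReal + d * M * Finset.univ.sup K',
    fun μ ν hμ hν x hx y hy u u' Y Y' hu' hY hY' => ?_⟩
  have hforce := norm_leaderForce_sub_leaderForce_le (u := u) hsup
    (fun ℓ z hz => ((norm_le_pi_norm _ ℓ).trans (hB z hz)).trans B.le_coe_toNNReal)
    NNReal.zero_le_coe hu' hY hY' (mem_closedBall_zero_iff.1 hx) (mem_closedBall_zero_iff.1 hy)
  have hW := W1_nonneg μ ν
  rw [mfField, mfField, add_sub_add_comm]
  refine (norm_add_le_of_le (norm_convolution_sub_convolution_le hK hμ hν hx hy) hforce).trans ?_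
  set S : ℝ := W1 μ ν + ‖x - y‖ + ‖u - u'‖ + ‖Y - Y'‖
  have h₁ : W1 μ ν + ‖x - y‖ ≤ S := by linarith [norm_nonneg (u - u'), norm_nonneg (Y - Y')]
  have h₂ : ‖u - u'‖ ≤ S := by linarith [norm_nonneg (x - y), norm_nonneg (Y - Y')]
  have h₃ : ‖x - y‖ + ‖Y - Y'‖ ≤ S := by linarith [norm_nonneg (u - u')]
  calc _ ≤ (K : ℝ) * S + (d * (S * B.toNNReal) + d * (M * ((Finset.univ.sup K' : ℝ≥0) * S))) := by
        gcongr
    _ = _ := by push_cast; ring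

theorem exists_isLipschitzField_mfField (hH : LocallyLipschitz H)
    (hG : ∀ ℓ, LocallyLipschitz (G ℓ)) (hHC : ∀ x, ‖H x‖ ≤ C * (1 + ‖x‖))
    (hGC : ∀ ℓ x, ‖G ℓ x‖ ≤ C * (1 + ‖x‖)) (hM : 0 ≤ M) (r : ℝ) :
    ∃ (V : ℝ) (K : ℝ≥0), ∀ u Y : Fin m → EuclideanSpace ℝ (Fin d), ‖u‖ ≤ M → ‖Y‖ ≤ r →
      IsLipschitzField r V K fun μ => mfField H G μ u Y := by
  have hC : 0 ≤ C := by simpa using (norm_nonneg _).trans (hHC 0)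
  obtain ⟨K, hK⟩ := exists_norm_mfField_sub_le (m := m) hH hG hM r
  refine ⟨C * (1 + 2 * r) + d * (M * (C * (1 + r + r))), K, fun u Y hu hY => ⟨?_, ?_⟩⟩
  · intro μ hμ x hx
    refine (norm_mfField_le hHC hGC hμ hu (mem_closedBall_zero_iff.1 hx)).trans ?_
    gcongr
  · intro μ ν hμ hν x hx y hy
    simpa using hK μ ν hμ hν x hx y hy u u Y Y hu hY hY

end VelocityField

section ParticleSystem

variable {d m N : ℕ} {H : EuclideanSpace ℝ (Fin d) → EuclideanSpace ℝ (Fin d)}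
  {G : Fin d → EuclideanSpace ℝ (Fin d) → EuclideanSpace ℝ (Fin d)} {T C M r : ℝ}
  {u Y : ℝ → Fin m → EuclideanSpace ℝ (Fin d)} {X : ℝ → Fin N → EuclideanSpace ℝ (Fin d)}

/-- A Carathéodory solution on `[0, T]` of the system of `m` leaders `Y` steered by the control `u`
and of `N` followers `X`. -/
structure IsParticleSol (T : ℝ) (H : EuclideanSpace ℝ (Fin d) → EuclideanSpace ℝ (Fin d))
    (G : Fin d → EuclideanSpace ℝ (Fin d) → EuclideanSpace ℝ (Fin d))
    (u Y : ℝ → Fin m → EuclideanSpace ℝ (Fin d)) (X : ℝ → Fin N → EuclideanSpace ℝ (Fin d)) :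
    Prop where
  leaders : IsPrimitiveOn Y u 0 T
  followers : IsPrimitiveOn X (fun s => finRHS H G (u s) (Y s) (X s)) 0 T

theorem intervalIntegrable_finRHS (hH : Continuous H) (hG : ∀ ℓ, Continuous (G ℓ)) {a b : ℝ}
    (hu : IntervalIntegrable u volume a b) (hY : ContinuousOn Y (uIcc a b))
    (hX : ContinuousOn X (uIcc a b)) (i : Fin N) :
    IntervalIntegrable (fun s => finRHS H G (u s) (Y s) (X s) i) volume a b := by
  have hYk : ∀ k, ContinuousOn (fun s => Y s k) (uIcc a b) := continuousOn_pi.1 hY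
  have hXi : ∀ i, ContinuousOn (fun s => X s i) (uIcc a b) := continuousOn_pi.1 hX
  have huk : ∀ k ℓ, IntervalIntegrable (fun s => u s k ℓ) volume a b := fun k ℓ =>
    let L : (Fin m → EuclideanSpace ℝ (Fin d)) →L[ℝ] ℝ :=
      (EuclideanSpace.proj ℓ).comp (ContinuousLinearMap.proj k)
    ⟨L.integrable_comp hu.1, L.integrable_comp hu.2⟩
  have hself : ContinuousOn (fun s => (N : ℝ)⁻¹ • ∑ j, H (X s i - X s j)) (uIcc a b) := by fun_prop
  have hforce : ∀ ℓ k, IntervalIntegrable (fun s => u s k ℓ • G ℓ (X s i - Y s k)) volume a b :=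
    fun ℓ k => (huk k ℓ).smul_continuousOn ((hG ℓ).comp_continuousOn ((hXi i).sub (hYk k)))
  have hsum := IntervalIntegrable.sum Finset.univ fun ℓ _ =>
    (IntervalIntegrable.sum Finset.univ fun k _ => hforce ℓ k).smul (m : ℝ)⁻¹
  refine (hself.intervalIntegrable.add hsum).congr fun s _ => ?_
  simp only [finRHS, Finset.sum_apply, Pi.smul_apply]

theorem isParticleSol_of_eq_add_integral (hH : Continuous H) (hG : ∀ ℓ, Continuous (G ℓ))
    (hT : 0 ≤ T) (hu : IntervalIntegrable u volume 0 T)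
    {Y₀ : Fin m → EuclideanSpace ℝ (Fin d)} {X₀ : Fin N → EuclideanSpace ℝ (Fin d)}
    (hX : ∀ i, ContinuousOn (fun t => X t i) (Icc 0 T))
    (hYint : ∀ k, ∀ t ∈ Icc 0 T, Y t k = Y₀ k + ∫ s in (0 : ℝ)..t, u s k)
    (hXint : ∀ i, ∀ t ∈ Icc 0 T,
      X t i = X₀ i + ∫ s in (0 : ℝ)..t, finRHS H G (u s) (Y s) (X s) i) :
    IsParticleSol T H G u Y X := by
  have hleaders : IsPrimitiveOn Y u 0 T := .of_forall_apply fun k =>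
    .of_eq_add_integral hT ⟨hu.1.eval k, hu.2.eval k⟩ (hYint k)
  refine ⟨hleaders, .of_forall_apply fun i => .of_eq_add_integral hT
    (intervalIntegrable_finRHS hH hG hu ?_ ?_ i) (hXint i)⟩ <;> rw [uIcc_of_le hT]
  · exact hleaders.continuousOn
  · exact continuousOn_pi.2 hX

theorem norm_finRHS_le [NeZero N] (hH : ∀ x, ‖H x‖ ≤ C * (1 + ‖x‖))
    (hG : ∀ ℓ x, ‖G ℓ x‖ ≤ C * (1 + ‖x‖)) {u Y : Fin m → EuclideanSpace ℝ (Fin d)}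
    (hu : ‖u‖ ≤ M) (X : Fin N → EuclideanSpace ℝ (Fin d)) :
    ‖finRHS H G u Y X‖ ≤ (2 * C + d * M * C) * ‖X‖ + (C + d * M * C * (1 + ‖Y‖)) := by
  refine (pi_norm_le_iff_of_nonempty _).2 fun i => ?_
  rw [← mfField_empMeas]
  exact (norm_mfField_le hH hG (isProbOnBall_empMeas (norm_le_pi_norm X)) hu
    (norm_le_pi_norm X i)).trans_eq (by ring)

theorem exists_norm_le_of_isParticleSol (hH : ∀ x, ‖H x‖ ≤ C * (1 + ‖x‖))
    (hG : ∀ ℓ x, ‖G ℓ x‖ ≤ C * (1 + ‖x‖)) (hT : 0 ≤ T) (hM : 0 ≤ M) (ρ R : ℝ) :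
    ∃ r ≥ R, ∀ (N : ℕ) [NeZero N] (u Y : ℝ → Fin m → EuclideanSpace ℝ (Fin d))
      (X : ℝ → Fin N → EuclideanSpace ℝ (Fin d)), IsParticleSol T H G u Y X →
      (∀ t ∈ Icc 0 T, ‖u t‖ ≤ M) → ‖Y 0‖ ≤ ρ → (∀ i, ‖X 0 i‖ ≤ R) →
      ∀ t ∈ Icc 0 T, ‖Y t‖ ≤ r ∧ ∀ i, ‖X t i‖ ≤ r := by
  have hC : 0 ≤ C := by simpa using (norm_nonneg _).trans (hH 0)
  set K : ℝ := 2 * C + d * M * C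
  set c : ℝ := C + d * M * C * (1 + (ρ + M * T)) with hc
  set r : ℝ := (R + c * T) * Real.exp (K * T) with hr
  refine ⟨max R (max (ρ + M * T) r), le_max_left _ _, fun N _ u Y X h hu hY hX => ?_⟩
  have h0 : (0 : ℝ) ∈ Icc 0 T := left_mem_Icc.2 hT
  have hleaders : ∀ t ∈ Icc 0 T, ‖Y t‖ ≤ ρ + M * T := fun t ht =>
    calc ‖Y t‖ ≤ ‖Y 0‖ + ‖Y t - Y 0‖ := norm_le_insert' _ _
      _ ≤ ρ + M * T := by
        gcongr
        refine (h.leaders.norm_sub_le hu h0 ht).trans ?_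
        rw [sub_zero, abs_of_nonneg ht.1]
        gcongr
        exact ht.2
  have hρ : 0 ≤ ρ + M * T := (norm_nonneg _).trans (hleaders 0 h0)
  have hfollowers : ∀ t ∈ Icc 0 T, ‖X t‖ ≤ r := fun t ht => by
    refine (h.followers.norm_le (K := K) (c := c) (by positivity) (by positivity)
      (fun s hs => (norm_finRHS_le hH hG (hu s hs) (X s)).trans ?_) ht).trans ?_
    · rw [hc]
      gcongr
      exact hleaders s hs
    · rw [sub_zero, hr]
      gcongr
      exact (pi_norm_le_iff_of_nonempty _).2 hX
  exact fun t ht => ⟨le_max_of_le_right (le_max_of_le_left (hleaders t ht)), fun i =>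
    le_max_of_le_right (le_max_of_le_right ((norm_le_pi_norm _ i).trans (hfollowers t ht)))⟩

end ParticleSystem

section CoupledSystem

variable {d m : ℕ} {H : EuclideanSpace ℝ (Fin d) → EuclideanSpace ℝ (Fin d)}
  {G : Fin d → EuclideanSpace ℝ (Fin d) → EuclideanSpace ℝ (Fin d)} {T R C M V r : ℝ}
  {u Y : ℝ → Fin m → EuclideanSpace ℝ (Fin d)} {μ : ℝ → Measure (EuclideanSpace ℝ (Fin d))}

theorem chiDist_le (Y Y' : Fin m → EuclideanSpace ℝ (Fin d))
    (μ ν : Measure (EuclideanSpace ℝ (Fin d))) :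
    chiDist Y Y' μ ν ≤ ‖Y - Y'‖ + W1 μ ν := by
  have hmean := norm_inv_smul_sum_le (v := fun k => ‖Y k - Y' k‖) (norm_nonneg (Y - Y'))
    fun k => (norm_norm _).trans_le (norm_le_pi_norm (Y - Y') k)
  exact add_le_add_left ((le_abs_self _).trans hmean) _

theorem isMFSol_of_isWeakSol (hY : IsPrimitiveOn Y u 0 T) (hu : ∀ t ∈ Icc 0 T, ‖u t‖ ≤ M)
    (hμ : ∀ t ∈ Icc 0 T, IsProbOnBall r (μ t))
    (hV : ∀ s ∈ Icc 0 T, ∀ t ∈ Icc 0 T, W1 (μ s) (μ t) ≤ V * |s - t|)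
    (hweak : IsWeakSol T (fun s => mfField H G (μ s) (u s) (Y s)) μ) :
    IsMFSol T H G u Y μ := by
  refine ⟨fun t ht => (hμ t ht).isProbabilityMeasure, ⟨max r 1, by positivity, fun t ht =>
    (isProbOnBall_iff.1 (hμ t ht)).2.trans (closedBall_subset_closedBall (le_max_left _ _))⟩,
    fun t ht ε hε => ?_, fun k => (hY.clm_comp (ContinuousLinearMap.proj k)).eq_add_integral,
    fun φ hφ hφc => (hweak φ hφ hφc).eq_add_integral⟩
  refine ⟨ε / (|M + V| + 1), by positivity, fun s hs hst => ?_⟩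
  rw [lt_div_iff₀ (by positivity)] at hst
  calc chiDist (Y s) (Y t) (μ s) (μ t) ≤ M * |s - t| + V * |s - t| :=
        (chiDist_le _ _ _ _).trans (add_le_add (hY.norm_sub_le hu ht hs) (hV s hs t ht))
    _ ≤ |s - t| * (|M + V| + 1) := by
        nlinarith [le_abs_self (M + V), abs_nonneg (s - t)]
    _ < ε := hst

theorem eventually_norm_mfField_sub_le (hH : LocallyLipschitz H) (hG : ∀ ℓ, LocallyLipschitz (G ℓ))
    {ι : Type*} {l : Filter ι} {S : Set ℝ} {u' Y' : ι → ℝ → Fin m → EuclideanSpace ℝ (Fin d)}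
    (hu : TendstoUniformlyOn u' u l S) (hY : TendstoUniformlyOn Y' Y l S)
    (huM : ∀ t ∈ S, ‖u t‖ ≤ M) (hYr : ∀ t ∈ S, ‖Y t‖ ≤ r) (hYr' : ∀ n, ∀ t ∈ S, ‖Y' n t‖ ≤ r) :
    ∀ ε > 0, ∀ᶠ n in l, ∀ s ∈ S, ∀ μ, IsProbOnBall r μ → ∀ x ∈ closedBall 0 r,
      ‖mfField H G μ (u' n s) (Y' n s) x - mfField H G μ (u s) (Y s) x‖ ≤ ε := by
  obtain ⟨L, hL⟩ := exists_norm_mfField_sub_le (m := m) hH hG (le_max_right M 0) r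
  intro ε hε
  have hδ : 0 < ε / (2 * (L + 1)) := by positivity
  filter_upwards [Metric.tendstoUniformlyOn_iff.1 hu _ hδ,
    Metric.tendstoUniformlyOn_iff.1 hY _ hδ] with n hun hYn s hs μ hμ x hx
  have := hμ.isProbabilityMeasure
  refine (hL μ μ hμ hμ x hx x hx _ _ _ _ ((huM s hs).trans (le_max_left _ _)) (hYr' n s hs)
    (hYr s hs)).trans ?_
  have hsmall : ‖u' n s - u s‖ + ‖Y' n s - Y s‖ ≤ ε / (2 * (L + 1)) + ε / (2 * (L + 1)) := by
    rw [← dist_eq_norm, ← dist_eq_norm, dist_comm, dist_comm (Y' n s)]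
    exact add_le_add (hun s hs).le (hYn s hs).le
  rw [W1_self, sub_self, norm_zero, add_zero, zero_add]
  calc (L : ℝ) * (‖u' n s - u s‖ + ‖Y' n s - Y s‖)
      ≤ (L + 1) * (ε / (2 * (L + 1)) + ε / (2 * (L + 1))) := by gcongr; simp
    _ = ε := by field_simp; ring

theorem exists_isMFSol_limit_of_isParticleSol (hH : LocallyLipschitz H)
    (hG : ∀ ℓ, LocallyLipschitz (G ℓ)) (hHC : ∀ x, ‖H x‖ ≤ C * (1 + ‖x‖))
    (hGC : ∀ ℓ x, ‖G ℓ x‖ ≤ C * (1 + ‖x‖)) (hT : 0 ≤ T) {N : ℕ → ℕ} [∀ n, NeZero (N n)]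
    {u' Y' : ℕ → ℝ → Fin m → EuclideanSpace ℝ (Fin d)}
    {X' : ∀ n, ℝ → Fin (N n) → EuclideanSpace ℝ (Fin d)} {μ₀ : Measure (EuclideanSpace ℝ (Fin d))}
    (h : ∀ n, IsParticleSol T H G (u' n) (Y' n) (X' n)) (hY : IsPrimitiveOn Y u 0 T)
    (huM : ∀ n, ∀ t ∈ Icc 0 T, ‖u' n t‖ ≤ M)
    (hu : TendstoUniformlyOn u' u Filter.atTop (Icc 0 T)) (hY₀ : ∀ n, Y' n 0 = Y 0)
    (hX₀ : ∀ n i, ‖X' n 0 i‖ ≤ R) (hμ₀ : IsProbOnBall R μ₀)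
    (hW : Filter.Tendsto (fun n => W1 (empMeas (X' n 0)) μ₀) Filter.atTop (nhds 0)) :
    ∃ μ, (∀ ε > 0, ∀ᶠ n in Filter.atTop, ∀ t ∈ Icc 0 T,
        chiDist (Y' n t) (Y t) (empMeas (X' n t)) (μ t) < ε) ∧
      IsMFSol T H G u Y μ ∧ μ 0 = μ₀ := by
  have hM : 0 ≤ M := (norm_nonneg _).trans (huM 0 0 (left_mem_Icc.2 hT))
  obtain ⟨r, hRr, hr⟩ := exists_norm_le_of_isParticleSol (m := m) hHC hGC hT hM ‖Y 0‖ R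
  have hYX' : ∀ n, ∀ t ∈ Icc 0 T, ‖Y' n t‖ ≤ r ∧ ∀ i, ‖X' n t i‖ ≤ r := fun n =>
    hr _ _ _ _ (h n) (huM n) (hY₀ n ▸ le_rfl) (hX₀ n)
  have hYlim : TendstoUniformlyOn Y' Y Filter.atTop (Icc 0 T) :=
    hY.tendstoUniformlyOn (fun n => (h n).leaders) (by simp only [hY₀, tendsto_const_nhds]) hu
  have huM' : ∀ t ∈ Icc 0 T, ‖u t‖ ≤ M := fun t ht =>
    le_of_tendsto (hu.tendsto_at ht).norm (.of_forall fun n => huM n t ht)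
  have hYr : ∀ t ∈ Icc 0 T, ‖Y t‖ ≤ r := fun t ht =>
    le_of_tendsto (hYlim.tendsto_at ht).norm (.of_forall fun n => (hYX' n t ht).1)
  obtain ⟨V, K, hVK⟩ := exists_isLipschitzField_mfField (m := m) hH hG hHC hGC hM r
  obtain ⟨μ, hμ0, hμ, hV, hconv, hweak⟩ := exists_meanField_limit hT
    (fun s hs => hVK _ _ (huM' s hs) (hYr s hs))
    (fun n s hs => hVK _ _ (huM n s hs) (hYX' n s hs).1)
    (eventually_norm_mfField_sub_le hH hG hu hYlim huM' hYr fun n t ht => (hYX' n t ht).1)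
    (fun n => by simpa only [mfField_empMeas] using (h n).followers)
    (fun n t ht => (hYX' n t ht).2) (hμ₀.mono hRr) hW
  refine ⟨μ, fun ε hε => ?_, isMFSol_of_isWeakSol hY huM' hμ hV hweak, hμ0⟩
  filter_upwards [hconv _ (half_pos hε), Metric.tendstoUniformlyOn_iff.1 hYlim _ (half_pos hε)]
    with n hWn hYn t ht
  calc chiDist (Y' n t) (Y t) (empMeas (X' n t)) (μ t)
      ≤ ‖Y' n t - Y t‖ + W1 (empMeas (X' n t)) (μ t) := chiDist_le _ _ _ _
    _ < ε / 2 + ε / 2 := add_lt_add (by rw [← dist_eq_norm, dist_comm]; exact hYn t ht) (hWn t ht)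
    _ = ε := add_halves ε

end CoupledSystem

/-- Mean-field limit with a variable control: if the atomic initial data
`μ⁰_N → μ⁰` in `W₁` and the controls `u_N → u*` in `L^∞`, then the solutions
`(Y_N, μ_N)` of the finite-dimensional systems converge in `C⁰([0,T], χ)` to a solution
`(Y*, μ*)` of the coupled leader/mean-field system with control `u*` and initial datum
`(Y⁰, μ⁰)`. -/
theorem mean_field_limit_existence
    {d m : ℕ} (hm : 0 < m) (T R : ℝ) (hT : 0 < T) (hR : 0 < R)
    (H : EuclideanSpace ℝ (Fin d) → EuclideanSpace ℝ (Fin d))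
    (G : Fin d → EuclideanSpace ℝ (Fin d) → EuclideanSpace ℝ (Fin d))
    (hA : HypA m H G)
    (𝒰 : Set (Fin m → EuclideanSpace ℝ (Fin d)))
    (h𝒰 : IsCompact 𝒰) (h𝒰ne : 𝒰.Nonempty)
    -- initial datum (Y⁰, μ⁰) with μ⁰ supported in B(0,R)
    (Y0 : Fin m → EuclideanSpace ℝ (Fin d))
    (μ0 : Measure (EuclideanSpace ℝ (Fin d))) (hμ0 : IsProbabilityMeasure μ0)
    (hμ0supp : msupport μ0 ⊆ closedBall (0 : EuclideanSpace ℝ (Fin d)) R)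
    -- the approximating atomic initial data, supported in B(0,R), with W₁(μ⁰_N, μ⁰) → 0
    (X0 : (N : ℕ) → Fin N → EuclideanSpace ℝ (Fin d))
    (hX0 : ∀ N i, X0 N i ∈ closedBall (0 : EuclideanSpace ℝ (Fin d)) R)
    (hμ0N : Filter.Tendsto (fun N => W1 (empMeas (X0 N)) μ0) Filter.atTop (nhds 0))
    -- the controls u_N → u* in L^∞([0,T], 𝒰)
    (uN : ℕ → ℝ → Fin m → EuclideanSpace ℝ (Fin d))
    (ustar : ℝ → Fin m → EuclideanSpace ℝ (Fin d))
    (huNmeas : ∀ N, Measurable (uN N)) (hustarmeas : Measurable ustar)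
    (huN𝒰 : ∀ N t, uN N t ∈ 𝒰) (hustar𝒰 : ∀ t, ustar t ∈ 𝒰)
    (huNconv : ∀ ε > 0, ∃ N₀, ∀ N ≥ N₀, ∀ t ∈ Icc (0:ℝ) T, ∀ k,
        ‖uN N t k - ustar t k‖ ≤ ε)
    -- the solutions of the finite-dimensional problems with control u_N and initial
    -- datum (Y⁰, X⁰_N)
    (YN : ℕ → ℝ → Fin m → EuclideanSpace ℝ (Fin d))
    (XN : (N : ℕ) → ℝ → Fin N → EuclideanSpace ℝ (Fin d))
    (hYNcont : ∀ N k, ContinuousOn (fun t => YN N t k) (Icc 0 T))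
    (hXNcont : ∀ N i, ContinuousOn (fun t => XN N t i) (Icc 0 T))
    (hYN0 : ∀ N, YN N 0 = Y0) (hXN0 : ∀ N, XN N 0 = X0 N)
    (hYN : ∀ N k, ∀ t ∈ Icc (0:ℝ) T,
        YN N t k = Y0 k + ∫ s in (0:ℝ)..t, uN N s k)
    (hXN : ∀ N i, ∀ t ∈ Icc (0:ℝ) T,
        XN N t i = X0 N i + ∫ s in (0:ℝ)..t,
          finRHS H G (uN N s) (YN N s) (XN N s) i) :
    ∃ (Ystar : ℝ → Fin m → EuclideanSpace ℝ (Fin d))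
      (μstar : ℝ → Measure (EuclideanSpace ℝ (Fin d))),
      -- uniform convergence on [0,T] in the χ-metric
      (∀ ε > 0, ∃ N₀, ∀ N ≥ N₀, ∀ t ∈ Icc (0:ℝ) T,
          chiDist (YN N t) (Ystar t) (empMeas (XN N t)) (μstar t) < ε) ∧
      IsMFSol T H G ustar Ystar μstar ∧
      Ystar 0 = Y0 ∧ μstar 0 = μ0 := by
  obtain ⟨M, hM⟩ := h𝒰.isBounded.exists_norm_le
  obtain ⟨C, -, hHC, hGC⟩ := hA.2.2.1
  have hfinite : ∀ N, IsParticleSol T H G (uN N) (YN N) (XN N) := fun N =>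
    isParticleSol_of_eq_add_integral hA.1.continuous (fun ℓ => (hA.2.1 ℓ).continuous) hT.le
      (intervalIntegrable_of_norm_le (huNmeas N) fun t => hM _ (huN𝒰 N t)) (hXNcont N) (hYN N)
      (hXN N)
  have hleaders : IsPrimitiveOn (fun t => Y0 + ∫ s in (0 : ℝ)..t, ustar s) ustar 0 T :=
    .of_eq_add_integral hT.le
      (intervalIntegrable_of_norm_le hustarmeas fun t => hM _ (hustar𝒰 t)) fun _ _ => rfl
  have hY0 : Y0 + ∫ s in (0 : ℝ)..0, ustar s = Y0 := by
    rw [intervalIntegral.integral_same, add_zero]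
  have hcontrols := tendstoUniformlyOn_pi_of_norm_sub_le huNconv
  -- The shift by one skips `N = 0`, for which `empMeas` is the zero measure.
  have hshift := Filter.tendsto_add_atTop_nat 1
  obtain ⟨μ, hconv, hμ, hμ0'⟩ := exists_isMFSol_limit_of_isParticleSol hA.1 hA.2.1 hHC hGC hT.le
    (fun n => hfinite (n + 1)) hleaders (fun n t _ => hM _ (huN𝒰 (n + 1) t))
    (fun v hv => hshift.eventually (hcontrols v hv)) (fun n => (hYN0 _).trans hY0.symm)
    (fun n i => mem_closedBall_zero_iff.1 (hXN0 (n + 1) ▸ hX0 (n + 1) i))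
    (isProbOnBall_iff.2 ⟨hμ0, hμ0supp⟩)
    (by simpa only [hXN0, Function.comp_def] using hμ0N.comp hshift)
  refine ⟨_, μ, fun ε hε => Filter.eventually_atTop.1 ?_, hμ, hY0, hμ0'⟩
  rw [← Filter.map_add_atTop_eq_nat 1, Filter.eventually_map]
  exact hconv ε hε

end
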